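/- arXiv:1406.3422 — 3 statements merged into one kernel-verified Lean document; each statement's English description precedes it below -/
import Mathlib

section
/- Let T > 0 and let E ⊆ (0,T) be a Lebesgue-measurable set with |E| > 0. Assume: (a) admissibility of B: for each τ > 0 there is a constant C(τ) > 0 such that ∫_0^τ ‖B S(t) u₀‖_U² dt ≤ C(τ) ‖u₀‖_X² for all u₀ ∈ D; and (b) observability from time intervals: there are constants d > 0 and k > 0 such that for every L ∈ (0,1] and every u₀ ∈ D, ‖S(L) u₀‖_X² ≤ e^{d / L^k} ∫_0^L ‖B S(t) u₀‖_U² dt. Then there exists a constant C > 0 (depending on E, T, d, k, b, C₀, M, α but not on u₀) such that ‖S(T) u₀‖_X ≤ C ∫_E ‖B S(t) u₀‖_U dt for all u₀ ∈ D. -/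
/-!
Smallness of an observed orbit `t ↦ B (S t x)` on a large part of a short interval propagates to the
whole interval: analyticity bounds its derivatives by `H * m! * R ^ m`, so up to a tiny remainder it
is a Taylor polynomial of degree `n`, which Lagrange interpolation at separated nodes controls. With
observability from time intervals this yields, whenever `E` fills most of `(s, s + L]` and `σ ≥ 0`,
`‖S (s + L) x‖ ≤ exp (C / L ^ k) * (exp (5 * σ) * I + exp (-σ) * ‖S s x‖)`, where `I` is the
integral of `‖B (S t x)‖` over `E ∩ (s, s + L]`. Along intervals `(t (m + 1), t m]` of length `L m`
shrinking geometrically to a density point of `E`, the choice of `σ` proportional to `C / L m ^ k`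
makes the quantities `exp (-12 * C / L m ^ k) * ‖S (t m) x‖` telescope, and they tend to `0`.
-/

open MeasureTheory Set

/-! ### Interpolation at separated nodes -/

section Interpolation

theorem exists_separated_of_le_volume {δ : ℝ} (hδ : 0 < δ) (n : ℕ) {F : Set ℝ} (hF : BddBelow F)
    (hvol : ENNReal.ofReal (2 * n * δ) ≤ volume F) :
    ∃ t : ℕ → ℝ, (∀ i < n, t i ∈ F) ∧ ∀ i j, i ≤ j → j < n → t i + δ * (j - i) ≤ t j := by
  induction n generalizing F with
  | zero => exact ⟨fun _ => 0, by simp, by simp⟩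
  | succ n ih =>
    have hpos : 0 < volume F := (ENNReal.ofReal_pos.2 (by positivity)).trans_le hvol
    obtain ⟨t₀, ht₀, ht₀_lt⟩ : ∃ t₀ ∈ F, t₀ < sInf F + δ :=
      exists_lt_of_csInf_lt (nonempty_of_measure_ne_zero hpos.ne') (by linarith)
    have hcover : F ⊆ (F ∩ Ici (t₀ + δ)) ∪ Ico (sInf F) (sInf F + 2 * δ) := fun x hx =>
      (le_or_gt (t₀ + δ) x).imp (fun h => ⟨hx, h⟩) fun h => ⟨csInf_le hF hx, by linarith⟩
    have hrest : ENNReal.ofReal (2 * n * δ) ≤ volume (F ∩ Ici (t₀ + δ)) := by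
      have h := hvol.trans ((measure_mono hcover).trans (measure_union_le _ _))
      rw [Real.volume_Ico, add_sub_cancel_left,
        show 2 * ((n + 1 : ℕ) : ℝ) * δ = 2 * n * δ + 2 * δ by push_cast; ring,
        ENNReal.ofReal_add (by positivity) (by positivity)] at h
      exact (ENNReal.add_le_add_iff_right ENNReal.ofReal_ne_top).1 h
    obtain ⟨t, ht, hsep⟩ := ih (hF.mono inter_subset_left) hrest
    refine ⟨fun i => Nat.casesOn i t₀ t, ?_, ?_⟩
    · rintro (_ | i) hi
      · exact ht₀
      · exact (ht i (by lia)).1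
    · rintro (_ | i) (_ | j) hij hj
      · simp
      · change t₀ + δ * (((j + 1 : ℕ) : ℝ) - ((0 : ℕ) : ℝ)) ≤ t j
        have hfirst : t₀ + δ ≤ t 0 := (ht 0 (by lia)).2
        have := hsep 0 j (by lia) (by lia)
        push_cast at this ⊢
        linarith
      · lia
      · simpa using hsep i j (by lia) (by lia)

theorem mul_abs_sub_le_abs_sub_of_add_mul_le {δ : ℝ} {n : ℕ} {t : ℕ → ℝ}
    (hsep : ∀ i j, i ≤ j → j < n → t i + δ * (j - i) ≤ t j) {i j : ℕ} (hi : i < n) (hj : j < n) :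
    δ * |(i : ℝ) - j| ≤ |t i - t j| := by
  wlog hij : i ≤ j generalizing i j
  · simpa only [abs_sub_comm] using this hj hi (le_of_not_ge hij)
  rw [abs_sub_comm, abs_of_nonneg (sub_nonneg.2 (Nat.cast_le.2 hij)), abs_sub_comm]
  exact (le_sub_iff_add_le'.2 (hsep i j hij hj)).trans (le_abs_self _)

theorem prod_erase_range_abs_sub (i m : ℕ) :
    ∏ j ∈ (Finset.range (i + m + 1)).erase i, |(i : ℝ) - j| = i.factorial * m.factorial := by
  induction m with
  | zero =>
    rw [add_zero, Finset.range_add_one, Finset.erase_insert (by simp), Nat.factorial_zero,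
      Nat.cast_one, mul_one, ← Finset.prod_range_reflect, ← Finset.prod_range_add_one_eq_factorial,
      Nat.cast_prod]
    refine Finset.prod_congr rfl fun j hj => ?_
    have hj : j + 1 ≤ i := Finset.mem_range.1 hj
    rw [Nat.sub_sub, add_comm 1 j, Nat.cast_sub hj, sub_sub_cancel, Nat.abs_cast]
  | succ m ih =>
    rw [← add_assoc, Finset.range_add_one, Finset.erase_insert_of_ne (by lia),
      Finset.prod_insert (by simp), ih, Nat.factorial_succ]
    push_cast
    rw [show (i : ℝ) - (i + m + 1) = -(m + 1) by ring, abs_neg, abs_of_nonneg (by positivity)]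
    ring

variable {n : ℕ} {δ w : ℝ} {t : ℕ → ℝ} {τ : ℝ}

theorem abs_eval_lagrange_basis_le (hδ : 0 < δ)
    (hsep : ∀ i j, i < n + 1 → j < n + 1 → δ * |(i : ℝ) - j| ≤ |t i - t j|)
    (hτ : ∀ j < n + 1, |τ - t j| ≤ w) {i : ℕ} (hi : i < n + 1) :
    |(Lagrange.basis (Finset.range (n + 1)) t i).eval τ| ≤
      (w / δ) ^ n / (i.factorial * (n - i).factorial) := by
  obtain ⟨m, rfl⟩ : ∃ m, n = i + m := Nat.exists_eq_add_of_le (Nat.lt_succ_iff.1 hi)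
  have hcard : ((Finset.range (i + m + 1)).erase i).card = i + m := by
    rw [Finset.card_erase_of_mem (Finset.mem_range.2 hi), Finset.card_range, Nat.add_sub_cancel]
  calc |(Lagrange.basis (Finset.range (i + m + 1)) t i).eval τ|
      = ∏ j ∈ (Finset.range (i + m + 1)).erase i, |(t i - t j)⁻¹ * (τ - t j)| := by
        rw [← Finset.abs_prod]
        simp [Lagrange.basis, Lagrange.basisDivisor, Polynomial.eval_prod]
    _ ≤ ∏ j ∈ (Finset.range (i + m + 1)).erase i, (w / δ * |(i : ℝ) - j|⁻¹) := by
        refine Finset.prod_le_prod (fun _ _ => abs_nonneg _) fun j hj => ?_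
        obtain ⟨hji, hj⟩ := Finset.mem_erase.1 hj
        have hj := Finset.mem_range.1 hj
        have hij : 0 < |(i : ℝ) - j| := abs_pos.2 (sub_ne_zero.2 (Nat.cast_injective.ne hji.symm))
        calc |(t i - t j)⁻¹ * (τ - t j)| = |t i - t j|⁻¹ * |τ - t j| := by rw [abs_mul, abs_inv]
          _ ≤ (δ * |(i : ℝ) - j|)⁻¹ * w := by
            gcongr
            exacts [hsep i j hi hj, hτ j hj]
          _ = w / δ * |(i : ℝ) - j|⁻¹ := by field_simp
    _ = (w / δ) ^ (i + m) / (i.factorial * (i + m - i).factorial) := by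
        rw [Finset.prod_mul_distrib, Finset.prod_const, hcard, Finset.prod_inv_distrib,
          prod_erase_range_abs_sub, Nat.add_sub_cancel_left, div_eq_mul_inv _ (_ * _)]

theorem sum_abs_eval_lagrange_basis_le (hδ : 0 < δ)
    (hsep : ∀ i j, i < n + 1 → j < n + 1 → δ * |(i : ℝ) - j| ≤ |t i - t j|)
    (hτ : ∀ j < n + 1, |τ - t j| ≤ w) :
    ∑ i ∈ Finset.range (n + 1), |(Lagrange.basis (Finset.range (n + 1)) t i).eval τ| ≤
      (2 * (w / δ)) ^ n / n.factorial :=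
  calc ∑ i ∈ Finset.range (n + 1), |(Lagrange.basis (Finset.range (n + 1)) t i).eval τ|
      ≤ ∑ i ∈ Finset.range (n + 1), (w / δ) ^ n / n.factorial * (n.choose i : ℝ) := by
        refine Finset.sum_le_sum fun i hi => ?_
        have hi := Finset.mem_range.1 hi
        refine (abs_eval_lagrange_basis_le hδ hsep hτ hi).trans_eq ?_
        rw [Nat.cast_choose ℝ (Nat.lt_succ_iff.1 hi)]
        field_simp
    _ = (2 * (w / δ)) ^ n / n.factorial := by
        rw [← Finset.mul_sum, ← Nat.cast_sum, Nat.sum_range_choose, mul_pow]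
        push_cast
        ring

variable {V : Type*} [NormedAddCommGroup V] [NormedSpace ℝ V]

theorem taylorWithinEval_eq_sum_eval_lagrange_basis_smul {ι : Type*} [DecidableEq ι]
    {s : Finset ι} {v : ι → ℝ} (hv : InjOn v s) {n : ℕ} (hn : n < s.card) (f : ℝ → V) (J : Set ℝ)
    (a τ : ℝ) :
    taylorWithinEval f n J a τ =
      ∑ i ∈ s, (Lagrange.basis s v i).eval τ • taylorWithinEval f n J a (v i) := by
  have hpow : ∀ j < n + 1,
      (τ - a) ^ j = ∑ i ∈ s, (Lagrange.basis s v i).eval τ * (v i - a) ^ j := by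
    intro j hj
    have hdeg : ((Polynomial.X - Polynomial.C a) ^ j).degree < (s.card : WithBot ℕ) := by
      rw [Polynomial.degree_pow, Polynomial.degree_X_sub_C, nsmul_one]
      exact_mod_cast (by lia : j < s.card)
    have h := congrArg (Polynomial.eval τ) (Lagrange.eq_interpolate hv hdeg)
    simpa [Lagrange.interpolate_apply, Polynomial.eval_finsetSum, mul_comm] using h
  simp only [taylor_within_apply, Finset.smul_sum, smul_smul]
  rw [Finset.sum_comm]
  refine Finset.sum_congr rfl fun j hj => ?_
  rw [hpow j (Finset.mem_range.1 hj), Finset.mul_sum, Finset.sum_smul]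
  exact Finset.sum_congr rfl fun i _ => by ring_nf

theorem norm_taylorWithinEval_le_of_separated_nodes (hδ : 0 < δ)
    (hsep : ∀ i j, i < n + 1 → j < n + 1 → δ * |(i : ℝ) - j| ≤ |t i - t j|)
    (hτ : ∀ j < n + 1, |τ - t j| ≤ w) {f : ℝ → V} {J : Set ℝ} {a θ : ℝ}
    (hθ : ∀ i < n + 1, ‖taylorWithinEval f n J a (t i)‖ ≤ θ) :
    ‖taylorWithinEval f n J a τ‖ ≤ (2 * (w / δ)) ^ n / n.factorial * θ := by
  have hinj : InjOn t (Finset.range (n + 1)) := by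
    intro i hi j hj hij
    have h := hsep i j (by simpa using hi) (by simpa using hj)
    rw [hij, sub_self, abs_zero] at h
    exact Nat.cast_injective (sub_eq_zero.1 (abs_nonpos_iff.1 (nonpos_of_mul_nonpos_right h hδ)))
  have hθ₀ : 0 ≤ θ := (norm_nonneg _).trans (hθ 0 n.succ_pos)
  calc ‖taylorWithinEval f n J a τ‖
      ≤ ∑ i ∈ Finset.range (n + 1), |(Lagrange.basis (Finset.range (n + 1)) t i).eval τ| * θ := by
        rw [taylorWithinEval_eq_sum_eval_lagrange_basis_smul hinj (by simp)]
        refine norm_sum_le_of_le _ fun i hi => ?_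
        rw [norm_smul, Real.norm_eq_abs]
        gcongr
        exact hθ i (Finset.mem_range.1 hi)
    _ ≤ (2 * (w / δ)) ^ n / n.factorial * θ := by
        rw [← Finset.sum_mul]
        gcongr
        exact sum_abs_eval_lagrange_basis_le hδ hsep hτ

theorem norm_le_of_norm_le_at_separated_nodes {f : ℝ → V} {a K θ : ℝ} (hδ : 0 < δ)
    (hf : ContDiffOn ℝ (n + 1) f (Icc a (a + w)))
    (hK : ∀ y ∈ Icc a (a + w), ‖iteratedDerivWithin (n + 1) f (Icc a (a + w)) y‖ ≤ K)
    (ht : ∀ i < n + 1, t i ∈ Icc a (a + w))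
    (hsep : ∀ i j, i < n + 1 → j < n + 1 → δ * |(i : ℝ) - j| ≤ |t i - t j|)
    (hθ : ∀ i < n + 1, ‖f (t i)‖ ≤ θ) (hτ : τ ∈ Icc a (a + w)) :
    ‖f τ‖ ≤ (2 * (w / δ)) ^ n / n.factorial * (θ + K * w ^ (n + 1) / n.factorial) +
      K * w ^ (n + 1) / n.factorial := by
  set J := Icc a (a + w)
  set P := taylorWithinEval f n J a
  set R := K * w ^ (n + 1) / n.factorial
  have hK₀ : 0 ≤ K := (norm_nonneg _).trans (hK τ hτ)
  have hremainder : ∀ x ∈ J, ‖f x - P x‖ ≤ R := by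
    intro x hx
    have hxa : 0 ≤ x - a := sub_nonneg.2 hx.1
    have hxw : x - a ≤ w := by linarith [hx.2]
    refine (taylor_mean_remainder_bound (hx.1.trans hx.2) hf hx hK).trans ?_
    change _ ≤ K * w ^ (n + 1) / n.factorial
    gcongr
  have hnode : ∀ i < n + 1, ‖P (t i)‖ ≤ θ + R := fun i hi => by
    have h := norm_le_norm_add_norm_sub' (P (t i)) (f (t i))
    rw [norm_sub_rev] at h
    linarith [hθ i hi, hremainder _ (ht i hi)]
  have hP : ‖P τ‖ ≤ (2 * (w / δ)) ^ n / n.factorial * (θ + R) :=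
    norm_taylorWithinEval_le_of_separated_nodes hδ hsep (fun j hj => by
      simpa using abs_sub_le_of_le_of_le hτ.1 hτ.2 (ht j hj).1 (ht j hj).2) hnode
  calc ‖f τ‖ ≤ ‖P τ‖ + ‖f τ - P τ‖ := norm_le_norm_add_norm_sub' _ _
    _ ≤ (2 * (w / δ)) ^ n / n.factorial * (θ + R) + R := add_le_add hP (hremainder τ hτ)

end Interpolation

/-! ### Propagation of smallness -/

section Smallness

variable {V : Type*} [NormedAddCommGroup V] [NormedSpace ℝ V] {f : ℝ → V} {a w H R : ℝ}

theorem pow_div_factorial_le_exp_five_mul (n : ℕ) :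
    (16 * (n + 1) : ℝ) ^ n / n.factorial ≤ Real.exp (5 * (n + 1)) := by
  have hsixteen : (16 : ℝ) ≤ Real.exp 4 :=
    calc (16 : ℝ) = (1 + 1) ^ 4 := by norm_num
      _ ≤ Real.exp 1 ^ 4 := by gcongr; exact Real.add_one_le_exp 1
      _ = Real.exp 4 := by rw [← Real.exp_nat_mul]; norm_num
  calc (16 * (n + 1) : ℝ) ^ n / n.factorial
      = 16 ^ n * ((n + 1 : ℝ) ^ n / n.factorial) := by rw [mul_pow, mul_div_assoc]
    _ ≤ Real.exp 4 ^ n * Real.exp (n + 1) := by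
        gcongr
        exact Real.pow_div_factorial_le_exp _ (by positivity) n
    _ ≤ Real.exp (5 * (n + 1)) := by
        rw [← Real.exp_nat_mul, ← Real.exp_add, Real.exp_le_exp]
        linarith

theorem mul_factorial_mul_pow_div_factorial_le_exp (hH : 0 ≤ H) (hw : 0 ≤ w) (hR : 0 ≤ R)
    (hwR : w * R ≤ Real.exp (-7)) (n : ℕ) :
    H * (n + 1).factorial * R ^ (n + 1) * w ^ (n + 1) / n.factorial ≤
      H * Real.exp (-6 * (n + 1)) :=
  calc H * (n + 1).factorial * R ^ (n + 1) * w ^ (n + 1) / n.factorial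
      = H * ((n + 1) * (w * R) ^ (n + 1)) := by
        rw [Nat.factorial_succ, mul_pow]
        push_cast
        field_simp
    _ ≤ H * (Real.exp (n + 1) * Real.exp (-7) ^ (n + 1)) := by
        gcongr
        linarith [Real.add_one_le_exp ((n : ℝ) + 1)]
    _ = H * Real.exp (-6 * (n + 1)) := by
        rw [← Real.exp_nat_mul, ← Real.exp_add]
        push_cast
        ring_nf

-- Interpolating at `n + 1` nodes of `F` at mutual distance `w / (8 * (n + 1))` loses the factor
-- `exp (5 * (n + 1))` against a Taylor remainder of order `exp (-6 * (n + 1))`.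
theorem norm_le_of_norm_le_on_quarter (hw : 0 < w) (hH : 0 ≤ H) (hR : 0 ≤ R)
    (hwR : w * R ≤ Real.exp (-7)) (hf : ContDiffOn ℝ (⊤ : ℕ∞) f (Icc a (a + w)))
    (hderiv : ∀ m, 1 ≤ m → ∀ y ∈ Icc a (a + w),
      ‖iteratedDerivWithin m f (Icc a (a + w)) y‖ ≤ H * m.factorial * R ^ m)
    {F : Set ℝ} (hF : F ⊆ Icc a (a + w)) (hvol : ENNReal.ofReal (w / 4) ≤ volume F)
    {θ : ℝ} (hθ : ∀ t ∈ F, ‖f t‖ ≤ θ) {τ : ℝ} (hτ : τ ∈ Icc a (a + w)) (n : ℕ) :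
    ‖f τ‖ ≤ Real.exp (5 * (n + 1)) * θ + 2 * H * Real.exp (-(n + 1)) := by
  set δ := w / (8 * (n + 1)) with hδ
  have hδ_pos : 0 < δ := by positivity
  obtain ⟨t, ht, hsep⟩ := exists_separated_of_le_volume hδ_pos (n + 1) (bddBelow_Icc.mono hF)
    (by convert hvol using 2; rw [hδ]; push_cast; field_simp; norm_num)
  have hθ₀ : 0 ≤ θ := (norm_nonneg _).trans (hθ _ (ht 0 n.succ_pos))
  set ρ := H * (n + 1).factorial * R ^ (n + 1) * w ^ (n + 1) / n.factorial
  have hρ : ρ ≤ H * Real.exp (-6 * (n + 1)) :=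
    mul_factorial_mul_pow_div_factorial_le_exp hH hw.le hR hwR n
  have hinterp := norm_le_of_norm_le_at_separated_nodes hδ_pos (hf.of_le (by exact_mod_cast le_top))
    (hderiv (n + 1) (by lia)) (fun i hi => hF (ht i hi))
    (fun i j hi hj => mul_abs_sub_le_abs_sub_of_add_mul_le hsep hi hj)
    (fun i hi => hθ _ (ht i hi)) hτ
  have hratio : 2 * (w / δ) = 16 * (n + 1) := by rw [hδ]; field_simp; norm_num
  have hbalance : Real.exp (5 * (n + 1)) * Real.exp (-6 * (n + 1)) = Real.exp (-(n + 1)) := by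
    rw [← Real.exp_add]
    ring_nf
  calc ‖f τ‖ ≤ (16 * (n + 1)) ^ n / n.factorial * (θ + ρ) + ρ := by rwa [hratio] at hinterp
    _ ≤ Real.exp (5 * (n + 1)) * (θ + H * Real.exp (-6 * (n + 1))) +
        H * Real.exp (-6 * (n + 1)) := by
        gcongr
        exact pow_div_factorial_le_exp_five_mul n
    _ = Real.exp (5 * (n + 1)) * θ + H * Real.exp (-(n + 1)) + H * Real.exp (-6 * (n + 1)) := by
        rw [← hbalance]
        ring
    _ ≤ Real.exp (5 * (n + 1)) * θ + H * Real.exp (-(n + 1)) + H * Real.exp (-(n + 1)) := by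
        gcongr
        linarith
    _ = Real.exp (5 * (n + 1)) * θ + 2 * H * Real.exp (-(n + 1)) := by ring

theorem ofReal_quarter_le_volume_inter_of_setIntegral_lt (hw : 0 < w) {E : Set ℝ}
    (hE : MeasurableSet E) (hdense : volume (Icc a (a + w) \ E) ≤ ENNReal.ofReal (w / 2))
    {g : ℝ → ℝ} (hg : ∀ t, 0 ≤ g t) (hint : IntegrableOn g (E ∩ Icc a (a + w))) {θ : ℝ}
    (hθ : 4 / w * ∫ t in E ∩ Icc a (a + w), g t < θ) :
    ENNReal.ofReal (w / 4) ≤ volume ((E ∩ Icc a (a + w)) ∩ {t | g t ≤ θ}) := by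
  set J := Icc a (a + w)
  have hθ₀ : 0 < θ := lt_of_le_of_lt (mul_nonneg (by positivity) (integral_nonneg hg)) hθ
  have hMarkov : volume.real ({t | θ ≤ g t} ∩ (E ∩ J)) ≤ w / 4 := by
    have h := mul_meas_ge_le_integral_of_nonneg (Filter.Eventually.of_forall hg) hint θ
    rw [measureReal_restrict_apply' (hE.inter measurableSet_Icc)] at h
    refine le_of_mul_le_mul_left (h.trans ?_) hθ₀
    calc ∫ t in E ∩ J, g t = w / 4 * (4 / w * ∫ t in E ∩ J, g t) := by field_simp
      _ ≤ θ * (w / 4) := by rw [mul_comm θ]; gcongr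
  have hrest : volume.real (J \ E) ≤ w / 2 := ENNReal.toReal_le_of_le_ofReal (by positivity) hdense
  have hcover : J ⊆ (J \ E) ∪ ({t | θ ≤ g t} ∩ (E ∩ J) ∪ (E ∩ J) ∩ {t | g t ≤ θ}) := by
    intro t ht
    by_cases htE : t ∈ E
    · exact (le_total θ (g t)).elim (fun h => .inr (.inl ⟨h, htE, ht⟩))
        fun h => .inr (.inr ⟨⟨htE, ht⟩, h⟩)
    · exact .inl ⟨ht, htE⟩
  have hJ : volume.real J = w := by simp [J, hw.le]
  have hfin : volume J ≠ ⊤ := by simp [J]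
  have hsub : (J \ E) ∪ ({t | θ ≤ g t} ∩ (E ∩ J) ∪ (E ∩ J) ∩ {t | g t ≤ θ}) ⊆ J :=
    union_subset sdiff_subset (union_subset (fun t ht => ht.2.2) fun t ht => ht.1.2)
  have hsum := (measureReal_mono hcover (measure_ne_top_of_subset hsub hfin)).trans
    (measureReal_union_le _ _)
  rw [hJ] at hsum
  refine ENNReal.ofReal_le_of_le_toReal ?_
  change w / 4 ≤ volume.real _
  linarith [measureReal_union_le (μ := volume) ({t | θ ≤ g t} ∩ (E ∩ J))
    ((E ∩ J) ∩ {t | g t ≤ θ})]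

theorem norm_le_exp_mul_setIntegral_norm_add (hw : 0 < w) (hH : 0 ≤ H) (hR : 0 ≤ R)
    (hwR : w * R ≤ Real.exp (-7)) (hf : ContDiffOn ℝ (⊤ : ℕ∞) f (Icc a (a + w)))
    (hderiv : ∀ m, 1 ≤ m → ∀ y ∈ Icc a (a + w),
      ‖iteratedDerivWithin m f (Icc a (a + w)) y‖ ≤ H * m.factorial * R ^ m)
    {E : Set ℝ} (hE : MeasurableSet E)
    (hdense : volume (Icc a (a + w) \ E) ≤ ENNReal.ofReal (w / 2))
    {τ : ℝ} (hτ : τ ∈ Icc a (a + w)) {σ : ℝ} (hσ : 0 ≤ σ) :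
    ‖f τ‖ ≤ Real.exp (5 * (σ + 1)) * (4 / w * ∫ t in E ∩ Icc a (a + w), ‖f t‖) +
      2 * H * Real.exp (-σ) := by
  have hint : IntegrableOn (fun t => ‖f t‖) (E ∩ Icc a (a + w)) :=
    hf.continuousOn.norm.integrableOn_Icc.mono_set inter_subset_right
  set I := 4 / w * ∫ t in E ∩ Icc a (a + w), ‖f t‖
  have hI₀ : 0 ≤ I := mul_nonneg (by positivity) (integral_nonneg fun _ => norm_nonneg _)
  have hbound : ∀ θ ∈ Ioi I, ‖f τ‖ ≤ Real.exp (5 * (σ + 1)) * θ + 2 * H * Real.exp (-σ) := by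
    intro θ (hθ : I < θ)
    have hθ₀ : 0 ≤ θ := hI₀.trans hθ.le
    have hvol := ofReal_quarter_le_volume_inter_of_setIntegral_lt hw hE hdense
      (fun t => norm_nonneg (f t)) hint hθ
    refine (norm_le_of_norm_le_on_quarter hw hH hR hwR hf hderiv
      (inter_subset_left.trans inter_subset_right) hvol (fun t ht => ht.2) hτ ⌊σ⌋₊).trans ?_
    gcongr
    · exact Nat.floor_le hσ
    · exact (Nat.lt_floor_add_one σ).le
  have hcont : Continuous fun θ => Real.exp (5 * (σ + 1)) * θ + 2 * H * Real.exp (-σ) := by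
    fun_prop
  exact ge_of_tendsto (hcont.continuousWithinAt (s := Ioi I))
    (eventually_nhdsWithin_of_forall hbound)

end Smallness

/-! ### Observed orbits -/

/-- A locally bounded semigroup with analytic orbits: `t ↦ S t x` is smooth for `t > 0`, its
derivatives take values in `D`, where `A` acts on them as the generator, and `C₀` is the constant of
the quantitative analytic estimate on `(0, 1]`. Neither `S 0 = id` nor continuity at `0` is part of
the notion. -/
structure IsAnalyticSemigroup {X : Type*} [NormedAddCommGroup X] [NormedSpace ℝ X]
    (S : ℝ → X →L[ℝ] X) (D : Submodule ℝ X) (A : X →ₗ[ℝ] X) (C₀ : ℝ) : Prop where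
  map_add : ∀ t s : ℝ, 0 ≤ t → 0 ≤ s → S (t + s) = (S t).comp (S s)
  exists_norm_le : ∀ τ : ℝ, ∃ K, ∀ t ∈ Icc 0 τ, ‖S t‖ ≤ K
  contDiffOn : ∀ x : X, ContDiffOn ℝ (⊤ : ℕ∞) (fun s => S s x) (Ioi 0)
  one_le : 1 ≤ C₀
  norm_iteratedDeriv_le : ∀ (x : X) (m : ℕ) (t : ℝ), 1 ≤ m → 0 < t → t ≤ 1 →
    ‖iteratedDeriv m (fun s => S s x) t‖ ≤ (C₀ * m / t) ^ m * ‖x‖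
  iteratedDeriv_mem : ∀ (x : X) (m : ℕ) (t : ℝ), 0 < t → iteratedDeriv m (fun s => S s x) t ∈ D
  map_iteratedDeriv : ∀ (x : X) (m : ℕ) (t : ℝ), 0 < t →
    A (iteratedDeriv m (fun s => S s x) t) = iteratedDeriv (m + 1) (fun s => S s x) t

theorem add_one_pow_add_one_le_exp_mul_factorial (m : ℕ) :
    (m + 1 : ℝ) ^ (m + 1) ≤ Real.exp (2 * m + 1) * m.factorial :=
  calc (m + 1 : ℝ) ^ (m + 1) = (m + 1) * ((m + 1) ^ m / m.factorial) * m.factorial := by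
        field_simp
        ring
    _ ≤ Real.exp m * Real.exp (m + 1) * m.factorial := by
        gcongr
        · exact Real.add_one_le_exp m
        · exact Real.pow_div_factorial_le_exp _ (by positivity) m
    _ = Real.exp (2 * m + 1) * m.factorial := by
        rw [← Real.exp_add]
        ring_nf

section ObservedOrbit

variable {X U : Type*} [NormedAddCommGroup X] [NormedSpace ℝ X]
  [NormedAddCommGroup U] [NormedSpace ℝ U]
  {D : Submodule ℝ X} {A : X →ₗ[ℝ] X} {B : X →ₗ[ℝ] U} {b : ℝ}

theorem hasDerivAt_map_of_norm_map_le_graphNorm (hB : ∀ v ∈ D, ‖B v‖ ≤ b * (‖A v‖ + ‖v‖))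
    {f : ℝ → X} {f' : X} {t : ℝ} (hf : HasDerivAt f f' t)
    (hAf : HasDerivAt (fun s => A (f s)) (A f') t) (hD : ∀ᶠ s in nhds t, f s ∈ D) (hD' : f' ∈ D) :
    HasDerivAt (fun s => B (f s)) (B f') t := by
  rw [hasDerivAt_iff_isLittleO] at *
  refine Asymptotics.IsBigO.trans_isLittleO (.of_bound b ?_) (hAf.norm_left.add hf.norm_left)
  filter_upwards [hD] with s hs
  have hmem : f s - f t - (s - t) • f' ∈ D :=
    D.sub_mem (D.sub_mem hs hD.self_of_nhds) (D.smul_mem _ hD')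
  have hbound := hB _ hmem
  simp only [map_sub, map_smul] at hbound
  rwa [Real.norm_of_nonneg (by positivity)]

namespace IsAnalyticSemigroup

variable {S : ℝ → X →L[ℝ] X} {C₀ : ℝ} (hS : IsAnalyticSemigroup S D A C₀)
include hS

theorem apply_mem (x : X) {t : ℝ} (ht : 0 < t) : S t x ∈ D := by
  simpa using hS.iteratedDeriv_mem x 0 t ht

theorem apply_add {t s : ℝ} (ht : 0 ≤ t) (hs : 0 ≤ s) (x : X) : S (t + s) x = S t (S s x) := by
  rw [hS.map_add t s ht hs, ContinuousLinearMap.comp_apply]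

theorem hasDerivAt_iteratedDeriv (x : X) (m : ℕ) {t : ℝ} (ht : 0 < t) :
    HasDerivAt (iteratedDeriv m fun s => S s x) (iteratedDeriv (m + 1) (fun s => S s x) t) t := by
  have hdiff : DifferentiableAt ℝ (iteratedDerivWithin m (fun s => S s x) (Ioi 0)) t :=
    ((hS.contDiffOn x).differentiableOn_iteratedDerivWithin (by exact_mod_cast WithTop.coe_lt_top m)
      (uniqueDiffOn_Ioi 0)).differentiableAt (Ioi_mem_nhds ht)
  rw [iteratedDeriv_succ]
  refine (hdiff.congr_of_eventuallyEq ?_).hasDerivAt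
  filter_upwards [Ioi_mem_nhds ht] with r hr
  exact (iteratedDerivWithin_of_isOpen isOpen_Ioi hr).symm

theorem iteratedDeriv_eq_iteratedDeriv_sub (x : X) (m : ℕ) {s t : ℝ} (hs : 0 ≤ s) (hst : s < t) :
    iteratedDeriv m (fun r => S r x) t = iteratedDeriv m (fun r => S r (S s x)) (t - s) := by
  have hshift : EqOn (fun r => S r x) (fun r => S (r - s) (S s x)) (Ioi s) := fun r hr => by
    simpa using hS.apply_add (sub_nonneg.2 (le_of_lt hr)) hs x
  rw [hshift.iteratedDeriv_of_isOpen isOpen_Ioi m hst,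
    iteratedDeriv_comp_sub_const m (fun r => S r (S s x))]

theorem norm_iteratedDeriv_le_of_le {y : X} {m n : ℕ} {h τ : ℝ} (hm : 1 ≤ m) (hmn : m ≤ n)
    (hh : 0 < h) (hhτ : h ≤ τ) (hτ : τ ≤ 1) :
    ‖iteratedDeriv m (fun r => S r y) τ‖ ≤ (C₀ * n / h) ^ n * ‖y‖ := by
  have hC₀ := hS.one_le
  have hτ₀ : 0 < τ := hh.trans_le hhτ
  have hn : (1 : ℝ) ≤ n := by exact_mod_cast hm.trans hmn
  have hbase : 1 ≤ C₀ * n / h := by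
    rw [one_le_div hh]
    nlinarith
  refine (hS.norm_iteratedDeriv_le y m τ hm hτ₀ hτ).trans ?_
  calc (C₀ * m / τ) ^ m * ‖y‖ ≤ (C₀ * n / h) ^ m * ‖y‖ := by gcongr
    _ ≤ (C₀ * n / h) ^ n * ‖y‖ := by gcongr

variable (hB : ∀ v ∈ D, ‖B v‖ ≤ b * (‖A v‖ + ‖v‖))
include hB

theorem hasDerivAt_map_iteratedDeriv (x : X) (m : ℕ) {t : ℝ} (ht : 0 < t) :
    HasDerivAt (fun r => B (iteratedDeriv m (fun s => S s x) r))
      (B (iteratedDeriv (m + 1) (fun s => S s x) t)) t := by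
  refine hasDerivAt_map_of_norm_map_le_graphNorm hB (hS.hasDerivAt_iteratedDeriv x m ht) ?_ ?_
    (hS.iteratedDeriv_mem x (m + 1) t ht)
  · rw [hS.map_iteratedDeriv x (m + 1) t ht]
    refine (hS.hasDerivAt_iteratedDeriv x (m + 1) ht).congr_of_eventuallyEq ?_
    filter_upwards [Ioi_mem_nhds ht] with r hr using hS.map_iteratedDeriv x m r hr
  · filter_upwards [Ioi_mem_nhds ht] with r hr using hS.iteratedDeriv_mem x m r hr

theorem iteratedDeriv_map (x : X) (m : ℕ) {t : ℝ} (ht : 0 < t) :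
    iteratedDeriv m (fun s => B (S s x)) t = B (iteratedDeriv m (fun s => S s x) t) := by
  induction m generalizing t with
  | zero => simp only [iteratedDeriv_zero]
  | succ m ih =>
    have heq : iteratedDeriv m (fun s => B (S s x)) =ᶠ[nhds t]
        fun r => B (iteratedDeriv m (fun s => S s x) r) := by
      filter_upwards [Ioi_mem_nhds ht] with r hr using ih hr
    rw [iteratedDeriv_succ, heq.deriv_eq, (hS.hasDerivAt_map_iteratedDeriv hB x m ht).deriv]

theorem contDiffOn_map (x : X) : ContDiffOn ℝ (⊤ : ℕ∞) (fun t => B (S t x)) (Ioi 0) := by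
  have heq : ∀ m, EqOn (iteratedDerivWithin m (fun t => B (S t x)) (Ioi 0))
      (fun t => B (iteratedDeriv m (fun s => S s x) t)) (Ioi 0) := fun m t ht => by
    rw [iteratedDerivWithin_of_isOpen isOpen_Ioi ht, hS.iteratedDeriv_map hB x m ht]
  refine contDiffOn_of_differentiableOn_deriv fun m _ => DifferentiableOn.congr ?_ (heq m)
  exact fun t ht =>
    (hS.hasDerivAt_map_iteratedDeriv hB x m ht).differentiableAt.differentiableWithinAt

theorem continuousOn_norm_map (x : X) : ContinuousOn (fun t => ‖B (S t x)‖) (Ioi 0) :=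
  (hS.contDiffOn_map hB x).continuousOn.norm

theorem norm_iteratedDeriv_map_le (hb : 0 ≤ b) (x : X) {m : ℕ} (hm : 1 ≤ m) {s t h : ℝ}
    (hs : 0 ≤ s) (hh : 0 < h) (hst : s + h ≤ t) (hts : t ≤ s + 1) :
    ‖iteratedDeriv m (fun r => B (S r x)) t‖ ≤
      2 * b * Real.exp 1 * C₀ / h * ‖S s x‖ * m.factorial * (Real.exp 2 * C₀ / h) ^ m := by
  have hC₀ := hS.one_le
  have ht : 0 < t := by linarith
  have horbit : ∀ n, 1 ≤ n → n ≤ m + 1 → ‖iteratedDeriv n (fun r => S r x) t‖ ≤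
      (C₀ * (m + 1 : ℕ) / h) ^ (m + 1) * ‖S s x‖ := fun n hn hnm => by
    rw [hS.iteratedDeriv_eq_iteratedDeriv_sub x n hs (by linarith)]
    exact hS.norm_iteratedDeriv_le_of_le hn hnm hh (by linarith) (by linarith)
  calc ‖iteratedDeriv m (fun r => B (S r x)) t‖
      ≤ b * (‖iteratedDeriv (m + 1) (fun r => S r x) t‖ +
          ‖iteratedDeriv m (fun r => S r x) t‖) := by
        rw [hS.iteratedDeriv_map hB x m ht, ← hS.map_iteratedDeriv x m t ht]
        exact hB _ (hS.iteratedDeriv_mem x m t ht)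
    _ ≤ b * ((C₀ * (m + 1 : ℕ) / h) ^ (m + 1) * ‖S s x‖ +
          (C₀ * (m + 1 : ℕ) / h) ^ (m + 1) * ‖S s x‖) := by
        gcongr
        exacts [horbit _ (by lia) le_rfl, horbit _ hm (by lia)]
    _ = 2 * b * (C₀ / h) ^ (m + 1) * ‖S s x‖ * ((m + 1 : ℝ) ^ (m + 1)) := by
        rw [mul_div_right_comm, mul_pow]
        push_cast
        ring
    _ ≤ 2 * b * (C₀ / h) ^ (m + 1) * ‖S s x‖ * (Real.exp (2 * m + 1) * m.factorial) := by
        gcongr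
        exact add_one_pow_add_one_le_exp_mul_factorial m
    _ = 2 * b * Real.exp 1 * C₀ / h * ‖S s x‖ * m.factorial * (Real.exp 2 * C₀ / h) ^ m := by
        rw [Real.exp_add, mul_comm (2 : ℝ) m, Real.exp_nat_mul]
        ring

end IsAnalyticSemigroup

end ObservedOrbit

/-! ### Interpolation between an observation and the initial state -/

theorem div_mul_exp_div_rpow_le_exp {P d k L : ℝ} (hP : 0 ≤ P) (hk : 0 < k) (hL : 0 < L)
    (hL₁ : L ≤ 1) : P / L * Real.exp (d / L ^ k) ≤ Real.exp ((P + 1 / k + d) / L ^ k) := by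
  have hLk : 0 < L ^ k := Real.rpow_pos_of_pos hL k
  have hP_le : P ≤ Real.exp (P / L ^ k) := by
    have h : P ≤ P / L ^ k := le_div_self hP hLk (Real.rpow_le_one hL.le hL₁ hk.le)
    linarith [Real.add_one_le_exp (P / L ^ k)]
  have hinv_le : L⁻¹ ≤ Real.exp (1 / k / L ^ k) := by
    rw [← Real.log_le_iff_le_exp (inv_pos.2 hL)]
    have h := Real.log_le_self (inv_pos.2 hLk).le
    rw [Real.log_inv, Real.log_rpow hL] at h
    rw [Real.log_inv, div_div, le_div_iff₀ (by positivity)]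
    calc -Real.log L * (k * L ^ k) = -(k * Real.log L) * L ^ k := by ring
      _ ≤ (L ^ k)⁻¹ * L ^ k := by gcongr
      _ = 1 := inv_mul_cancel₀ hLk.ne'
  calc P / L * Real.exp (d / L ^ k)
      ≤ Real.exp (P / L ^ k) * Real.exp (1 / k / L ^ k) * Real.exp (d / L ^ k) := by
        rw [div_eq_mul_inv]
        gcongr
    _ = Real.exp ((P + 1 / k + d) / L ^ k) := by
        rw [← Real.exp_add, ← Real.exp_add, add_div, add_div]

theorem exists_le_half_and_mul_le_exp_neg_seven {C₀ : ℝ} (hC₀ : 1 ≤ C₀) :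
    ∃ c > 0, c ≤ 1 / 2 ∧ 2 * Real.exp 2 * C₀ * c ≤ Real.exp (-7) := by
  refine ⟨Real.exp (-9) / (2 * C₀), by positivity, ?_, le_of_eq ?_⟩
  · have : Real.exp (-9) ≤ 1 := Real.exp_le_one_iff.2 (by norm_num)
    gcongr
    linarith
  · rw [show (-7 : ℝ) = 2 + -9 by norm_num, Real.exp_add]
    field_simp

/-- Observability of `S` through `B` from every time interval of length `L ≤ 1`, at the cost
`exp (d / L ^ k)`. The inequality is required only when the observation is square integrable, since
otherwise the Bochner integral on the right is `0`. -/
def IsObservableOnIntervals {X U : Type*} [NormedAddCommGroup X] [NormedSpace ℝ X]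
    [NormedAddCommGroup U] [NormedSpace ℝ U]
    (S : ℝ → X →L[ℝ] X) (D : Submodule ℝ X) (B : X →ₗ[ℝ] U) (d k : ℝ) : Prop :=
  ∀ L : ℝ, 0 < L → L ≤ 1 → ∀ u₀ ∈ D,
    IntervalIntegrable (fun t => ‖B (S t u₀)‖ ^ 2) volume 0 L →
      ‖S L u₀‖ ^ 2 ≤ Real.exp (d / L ^ k) * ∫ t in (0 : ℝ)..L, ‖B (S t u₀)‖ ^ 2

namespace IsAnalyticSemigroup

variable {X U : Type*} [NormedAddCommGroup X] [NormedSpace ℝ X]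
  [NormedAddCommGroup U] [NormedSpace ℝ U]
  {S : ℝ → X →L[ℝ] X} {D : Submodule ℝ X} {A : X →ₗ[ℝ] X} {B : X →ₗ[ℝ] U} {C₀ b d k : ℝ}
  (hS : IsAnalyticSemigroup S D A C₀) (hB : ∀ v ∈ D, ‖B v‖ ≤ b * (‖A v‖ + ‖v‖))
include hS hB

theorem norm_apply_le_exp_mul_of_forall_norm_map_le (hd : 0 ≤ d)
    (hobs : IsObservableOnIntervals S D B d k) {x : X} {s h Q : ℝ} (hs : 0 < s) (hh : 0 < h)
    (hh₁ : h ≤ 1) (hQ : ∀ t ∈ Icc s (s + h), ‖B (S t x)‖ ≤ Q) :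
    ‖S (s + h) x‖ ≤ Real.exp (d / h ^ k) * Q := by
  have hQ₀ : 0 ≤ Q := (norm_nonneg _).trans (hQ s ⟨le_rfl, by linarith⟩)
  have hcongr : EqOn (fun t => ‖B (S (t + s) x)‖ ^ 2) (fun t => ‖B (S t (S s x))‖ ^ 2)
      (uIcc 0 h) := fun t ht => by
    rw [uIcc_of_le hh.le] at ht
    simp only [hS.apply_add ht.1 hs.le]
  have hint : IntervalIntegrable (fun t => ‖B (S t (S s x))‖ ^ 2) volume 0 h := by
    refine ContinuousOn.intervalIntegrable (ContinuousOn.congr ?_ hcongr.symm)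
    refine ((hS.continuousOn_norm_map hB x).comp (by fun_prop) fun t ht => ?_).pow 2
    rw [uIcc_of_le hh.le] at ht
    exact add_pos_of_nonneg_of_pos ht.1 hs
  have hsq : ∫ t in (0 : ℝ)..h, ‖B (S t (S s x))‖ ^ 2 ≤ Q ^ 2 := by
    have hle : ∫ t in (0 : ℝ)..h, ‖B (S t (S s x))‖ ^ 2 ≤ ∫ _ in (0 : ℝ)..h, Q ^ 2 := by
      refine intervalIntegral.integral_mono_on hh.le hint (by simp) fun t ht => ?_
      rw [← hS.apply_add ht.1 hs.le]
      gcongr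
      exact hQ _ ⟨by linarith [ht.1], by linarith [ht.2]⟩
    rw [intervalIntegral.integral_const, sub_zero, smul_eq_mul] at hle
    exact hle.trans (mul_le_of_le_one_left (sq_nonneg Q) hh₁)
  have hexp : 1 ≤ Real.exp (d / h ^ k) :=
    Real.one_le_exp (div_nonneg hd (Real.rpow_nonneg hh.le k))
  rw [add_comm, hS.apply_add hh.le hs.le]
  refine le_of_sq_le_sq ?_ (by positivity)
  calc ‖S h (S s x)‖ ^ 2
      ≤ Real.exp (d / h ^ k) * ∫ t in (0 : ℝ)..h, ‖B (S t (S s x))‖ ^ 2 :=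
        hobs h hh hh₁ _ (hS.apply_mem x hs) hint
    _ ≤ Real.exp (d / h ^ k) ^ 2 * Q ^ 2 := by
        gcongr
        · exact intervalIntegral.integral_nonneg hh.le fun _ _ => sq_nonneg _
        · exact le_self_pow₀ hexp two_ne_zero
    _ = (Real.exp (d / h ^ k) * Q) ^ 2 := (mul_pow _ _ _).symm

theorem norm_map_le_exp_mul_setIntegral_add (hb : 0 ≤ b) (x : X) {s L c : ℝ} (hs : 0 ≤ s)
    (hL : 0 < L) (hL₁ : L ≤ 1) (hc : 0 < c) (hc₂ : c ≤ 1 / 2)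
    (hcC₀ : 2 * Real.exp 2 * C₀ * c ≤ Real.exp (-7)) {E : Set ℝ} (hE : MeasurableSet E)
    (hdense : volume (Icc (s + L / 2) (s + L / 2 + c * L) \ E) ≤ ENNReal.ofReal (c * L / 2))
    {τ : ℝ} (hτ : τ ∈ Icc (s + L / 2) (s + L / 2 + c * L)) {σ : ℝ} (hσ : 0 ≤ σ) :
    ‖B (S τ x)‖ ≤ Real.exp (5 * (σ + 1)) *
        (4 / (c * L) * ∫ t in E ∩ Icc (s + L / 2) (s + L / 2 + c * L), ‖B (S t x)‖) +
      2 * (2 * b * Real.exp 1 * C₀ / (L / 2) * ‖S s x‖) * Real.exp (-σ) := by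
  have hC₀ := hS.one_le
  have hcL : c * L ≤ L / 2 := by nlinarith
  have hpos : ∀ t ∈ Icc (s + L / 2) (s + L / 2 + c * L), 0 < t := fun t ht => by linarith [ht.1]
  refine norm_le_exp_mul_setIntegral_norm_add (R := Real.exp 2 * C₀ / (L / 2)) (by positivity)
    (by positivity) (by positivity) (le_of_eq_of_le ?_ hcC₀)
    ((hS.contDiffOn_map hB x).mono hpos) (fun m hm y hy => ?_) hE hdense hτ hσ
  · field_simp
  · have hsmooth : ContDiffAt ℝ m (fun t => B (S t x)) y :=
      ((hS.contDiffOn_map hB x).contDiffAt (Ioi_mem_nhds (hpos y hy))).of_le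
        (by exact_mod_cast le_top)
    rw [iteratedDerivWithin_eq_iteratedDeriv (uniqueDiffOn_Icc (by linarith [mul_pos hc hL]))
      hsmooth hy]
    exact hS.norm_iteratedDeriv_map_le hB hb x hm hs (half_pos hL) hy.1 (by linarith [hy.2])

theorem setIntegral_norm_map_mono (x : X) {s t : ℝ} (hs : 0 < s) {J E : Set ℝ}
    (hJ : J ⊆ Ioc s t) :
    ∫ r in E ∩ J, ‖B (S r x)‖ ≤ ∫ r in E ∩ Ioc s t, ‖B (S r x)‖ := by
  have hint : IntegrableOn (fun r => ‖B (S r x)‖) (E ∩ Ioc s t) :=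
    ((hS.continuousOn_norm_map hB x).mono fun r hr => hs.trans_le hr.1).integrableOn_Icc.mono_set
      (inter_subset_right.trans Ioc_subset_Icc_self)
  exact setIntegral_mono_set hint (.of_forall fun _ => norm_nonneg _)
    (inter_subset_inter_right E hJ).eventuallyLE

theorem norm_map_le_div_mul_setIntegral_add (hb : 0 ≤ b) (x : X) {s L c : ℝ} (hs : 0 < s)
    (hL : 0 < L) (hL₁ : L ≤ 1) (hc : 0 < c) (hc₂ : c ≤ 1 / 2)
    (hcC₀ : 2 * Real.exp 2 * C₀ * c ≤ Real.exp (-7)) {E : Set ℝ} (hE : MeasurableSet E)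
    (hdense : volume (Ioc s (s + L) \ E) ≤ ENNReal.ofReal (c / 2 * L))
    {τ : ℝ} (hτ : τ ∈ Icc (s + L / 2) (s + L / 2 + c * L)) {σ : ℝ} (hσ : 0 ≤ σ) :
    ‖B (S τ x)‖ ≤ (4 * Real.exp 5 / c + 8 * b * Real.exp 1 * C₀) / L *
      (Real.exp (5 * σ) * (∫ t in E ∩ Ioc s (s + L), ‖B (S t x)‖) +
        Real.exp (-σ) * ‖S s x‖) := by
  have hC₀ := hS.one_le
  set I := ∫ t in E ∩ Ioc s (s + L), ‖B (S t x)‖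
  have : 0 ≤ I := integral_nonneg fun _ => norm_nonneg _
  have hcL : c * L ≤ L / 2 := by nlinarith
  have hJ : Icc (s + L / 2) (s + L / 2 + c * L) ⊆ Ioc s (s + L) := fun t ht =>
    ⟨by linarith [ht.1], by linarith [ht.2]⟩
  have hdenseJ : volume (Icc (s + L / 2) (s + L / 2 + c * L) \ E) ≤ ENNReal.ofReal (c * L / 2) :=
    (measure_mono (sdiff_subset_sdiff_left hJ)).trans (hdense.trans_eq (by ring_nf))
  calc ‖B (S τ x)‖
      ≤ Real.exp (5 * (σ + 1)) * (4 / (c * L) * I) +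
          2 * (2 * b * Real.exp 1 * C₀ / (L / 2) * ‖S s x‖) * Real.exp (-σ) := by
        refine (hS.norm_map_le_exp_mul_setIntegral_add hB hb x hs.le hL hL₁ hc hc₂ hcC₀ hE hdenseJ
          hτ hσ).trans ?_
        gcongr
        exact hS.setIntegral_norm_map_mono hB x hs hJ
    _ = 4 * Real.exp 5 / c / L * (Real.exp (5 * σ) * I) +
          8 * b * Real.exp 1 * C₀ / L * (Real.exp (-σ) * ‖S s x‖) := by
        rw [show 5 * (σ + 1) = 5 * σ + 5 by ring, Real.exp_add]
        field_simp
        ring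
    _ ≤ (4 * Real.exp 5 / c + 8 * b * Real.exp 1 * C₀) / L *
          (Real.exp (5 * σ) * I + Real.exp (-σ) * ‖S s x‖) := by
        rw [mul_add]
        gcongr
        · exact le_add_of_nonneg_right (by positivity)
        · exact le_add_of_nonneg_left (by positivity)

theorem norm_apply_le_exp_div_rpow_mul (hb : 0 ≤ b) (hd : 0 ≤ d) (hk : 0 < k)
    (hobs : IsObservableOnIntervals S D B d k) :
    ∃ C > 0, ∃ ε > 0, ∀ (x : X) (s L σ : ℝ) (E : Set ℝ), 0 < s → 0 < L → L ≤ 1 → 0 ≤ σ →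
      MeasurableSet E → volume (Ioc s (s + L) \ E) ≤ ENNReal.ofReal (ε * L) →
      ‖S (s + L) x‖ ≤ Real.exp (C / L ^ k) *
        (Real.exp (5 * σ) * (∫ t in E ∩ Ioc s (s + L), ‖B (S t x)‖) +
          Real.exp (-σ) * ‖S s x‖) := by
  have hC₀ := hS.one_le
  obtain ⟨K, hK⟩ := hS.exists_norm_le 1
  have hK₀ : 0 ≤ K := (norm_nonneg _).trans (hK 0 (by simp))
  obtain ⟨c, hc, hc₂, hcC₀⟩ := exists_le_half_and_mul_le_exp_neg_seven hC₀
  set P := 4 * Real.exp 5 / c + 8 * b * Real.exp 1 * C₀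
  have : 0 ≤ P := by positivity
  refine ⟨K * P + 1 / k + d / c ^ k, by positivity, c / 2, by positivity, ?_⟩
  intro x s L σ E hs hL hL₁ hσ hE hdense
  set W := Real.exp (5 * σ) * (∫ t in E ∩ Ioc s (s + L), ‖B (S t x)‖) +
    Real.exp (-σ) * ‖S s x‖
  have : 0 ≤ W := by positivity
  have hcL : c * L ≤ L / 2 := by nlinarith
  have hcL₀ : 0 < c * L := mul_pos hc hL
  have hmid := hS.norm_apply_le_exp_mul_of_forall_norm_map_le hB hd hobs (by linarith) hcL₀
    (by linarith) fun τ hτ =>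
      hS.norm_map_le_div_mul_setIntegral_add hB hb x hs hL hL₁ hc hc₂ hcC₀ hE hdense hτ hσ
  have hlast : ‖S (s + L) x‖ ≤ K * ‖S (s + L / 2 + c * L) x‖ := by
    rw [show s + L = (L / 2 - c * L) + (s + L / 2 + c * L) by ring,
      hS.apply_add (by linarith) (by linarith)]
    exact (S _).le_of_opNorm_le (hK _ ⟨by linarith, by linarith⟩) _
  calc ‖S (s + L) x‖ ≤ K * (Real.exp (d / (c * L) ^ k) * (P / L * W)) := hlast.trans (by gcongr)
    _ = K * P / L * Real.exp (d / c ^ k / L ^ k) * W := by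
        rw [Real.mul_rpow hc.le hL.le, div_div]
        ring
    _ ≤ Real.exp ((K * P + 1 / k + d / c ^ k) / L ^ k) * W := by
        gcongr
        exact div_mul_exp_div_rpow_le_exp (by positivity) hk hL hL₁

end IsAnalyticSemigroup

/-! ### Telescoping towards a density point -/

section Telescoping

variable {E : Set ℝ}

theorem exists_mem_eventually_volume_Ioc_sdiff_le (hE : MeasurableSet E) (hE₀ : volume E ≠ 0)
    {η : ℝ} (hη : 0 < η) :
    ∃ l ∈ E, ∀ᶠ r in nhdsWithin 0 (Ioi 0),
      volume (Ioc l (l + r) \ E) ≤ ENNReal.ofReal (η * r) := by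
  have hae := (IsUnifLocDoublingMeasure.vitaliFamily (volume : Measure ℝ)
    1).ae_tendsto_measure_inter_div_of_measurableSet hE.compl
  obtain ⟨l, hlE, hl⟩ := ((frequently_ae_mem_iff.2 hE₀).and_eventually hae).exists
  rw [indicator_of_notMem (notMem_compl_iff.2 hlE)] at hl
  have hshift : Filter.Tendsto (fun r : ℝ => l + r) (nhdsWithin 0 (Ioi 0))
      (nhdsWithin l (Ioi l)) :=
    tendsto_nhdsWithin_iff.2 ⟨((continuous_const_add l).tendsto' 0 l (add_zero l)).mono_left
      nhdsWithin_le_nhds, by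
        filter_upwards [self_mem_nhdsWithin] with r hr using lt_add_of_pos_right l hr⟩
  refine ⟨l, hlE, ?_⟩
  filter_upwards [((hl.comp (Real.tendsto_Icc_vitaliFamily_right l)).comp hshift).eventually
    (ge_mem_nhds (ENNReal.ofReal_pos.2 hη)), self_mem_nhdsWithin] with r hr hr₀
  simp only [Function.comp_apply, Real.volume_Icc, add_sub_cancel_left] at hr
  rw [ENNReal.div_le_iff (ENNReal.ofReal_pos.2 hr₀).ne' ENNReal.ofReal_ne_top,
    ← ENNReal.ofReal_mul hη.le] at hr
  refine (measure_mono ?_).trans hr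
  exact fun t ht => ⟨ht.2, Ioc_subset_Icc_self ht.1⟩

theorem exists_geometric_intervals (hE : MeasurableSet E) (hE₀ : volume E ≠ 0) {T : ℝ}
    (hET : E ⊆ Ioo 0 T) {ε k q : ℝ} (hε : 0 < ε) (hk : 0 < k) (hq : 1 < q) :
    ∃ t L : ℕ → ℝ, (∀ m, t m ∈ Ioo 0 T) ∧ (∀ m, L m ∈ Ioc 0 1) ∧
      (∀ m, t m = t (m + 1) + L m) ∧ (∀ m, L m ^ k * q ^ m = L 0 ^ k) ∧
      ∀ m, volume (Ioc (t (m + 1)) (t m) \ E) ≤ ENNReal.ofReal (ε * L m) := by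
  have : 0 < q := by linarith
  obtain ⟨z, hz, hz₁, hzk⟩ : ∃ z > 0, z < 1 ∧ z ^ k = q⁻¹ :=
    ⟨q⁻¹ ^ k⁻¹, by positivity,
      Real.rpow_lt_one (by positivity) (inv_lt_one_of_one_lt₀ hq) (by positivity),
      Real.rpow_inv_rpow (by positivity) hk.ne'⟩
  have hz₂ : 0 < 1 - z := sub_pos.2 hz₁
  obtain ⟨l, hlE, hl⟩ :=
    exists_mem_eventually_volume_Ioc_sdiff_le hE hE₀ (mul_pos hε hz₂)
  obtain ⟨R, hR, hdense⟩ := mem_nhdsGT_iff_exists_Ioc_subset.1 hl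
  obtain ⟨r, hr, hr_lt⟩ := exists_between
    (show 0 < min R (min 1 (T - l)) from
      lt_min hR (lt_min one_pos (sub_pos.2 (hET hlE).2)))
  simp only [lt_min_iff] at hr_lt
  have hpow : ∀ m, r * z ^ m ≤ r := fun m =>
    mul_le_of_le_one_right hr.le (pow_le_one₀ hz.le hz₁.le)
  have hpow₀ : ∀ m, 0 < r * z ^ m := fun m => by positivity
  refine ⟨fun m => l + r * z ^ m, fun m => (1 - z) * (r * z ^ m), fun m => ⟨?_, ?_⟩,
    fun m => ⟨mul_pos hz₂ (hpow₀ m), ?_⟩, fun m => by ring, fun m => ?_, fun m => ?_⟩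
  · linarith [(hET hlE).1, hpow₀ m]
  · linarith [hpow m]
  · exact mul_le_one₀ (by linarith) (hpow₀ m).le (by linarith [hpow m])
  · beta_reduce
    rw [← mul_assoc, Real.mul_rpow (by positivity) (by positivity),
      ← Real.rpow_pow_comm hz.le, hzk, inv_pow, mul_assoc, inv_mul_cancel₀ (by positivity)]
    simp only [pow_zero, mul_one]
  · refine (measure_mono (sdiff_subset_sdiff_left (Ioc_subset_Ioc_left ?_))).trans
      ((hdense ⟨hpow₀ m, by linarith [hpow m]⟩).trans_eq (by ring_nf))
    linarith [hpow₀ (m + 1)]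

theorem le_setIntegral_of_forall_le_setIntegral_add (hE : MeasurableSet E) {g : ℝ → ℝ}
    (hg : ∀ t, 0 ≤ g t) (hint : IntegrableOn g E) {t v : ℕ → ℝ} (ht : Antitone t)
    (hv : Filter.Tendsto v Filter.atTop (nhds 0))
    (hstep : ∀ m, v m ≤ (∫ r in E ∩ Ioc (t (m + 1)) (t m), g r) + v (m + 1)) :
    v 0 ≤ ∫ r in E, g r := by
  have hpartial : ∀ n, v 0 ≤ (∫ r in E ∩ Ioc (t n) (t 0), g r) + v n := by
    intro n
    induction n with
    | zero => simp
    | succ n ih =>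
      have hdisj : Disjoint (E ∩ Ioc (t (n + 1)) (t n)) (E ∩ Ioc (t n) (t 0)) :=
        (Ioc_disjoint_Ioc_of_le le_rfl).mono inter_subset_right inter_subset_right
      rw [← Ioc_union_Ioc_eq_Ioc (ht n.le_succ) (ht n.zero_le), inter_union_distrib_left,
        setIntegral_union hdisj (hE.inter measurableSet_Ioc) (hint.mono_set inter_subset_left)
          (hint.mono_set inter_subset_left)]
      linarith [hstep n]
  refine ge_of_tendsto' (by simpa using hv.const_add (∫ r in E, g r)) fun n =>
    (hpartial n).trans ?_
  gcongr
  · exact .of_forall hg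
  · exact inter_subset_left

-- At `σ = 11 / 5 * (C * y)` both exponents match exactly.
theorem exp_neg_mul_le_add_exp_neg_mul {C y I a a' : ℝ} (hCy : 0 ≤ C * y)
    (h : ∀ σ, 0 ≤ σ → a ≤ Real.exp (C * y) * (Real.exp (5 * σ) * I + Real.exp (-σ) * a')) :
    Real.exp (-12 * C * y) * a ≤ I + Real.exp (-12 * C * (11 / 10 * y)) * a' :=
  calc Real.exp (-12 * C * y) * a
      ≤ Real.exp (-12 * C * y) * (Real.exp (C * y) *
          (Real.exp (5 * (11 / 5 * (C * y))) * I + Real.exp (-(11 / 5 * (C * y))) * a')) := by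
        gcongr
        exact h _ (by positivity)
    _ = Real.exp (-12 * C * y + C * y + 5 * (11 / 5 * (C * y))) * I +
          Real.exp (-12 * C * y + C * y + -(11 / 5 * (C * y))) * a' := by
        simp only [Real.exp_add]
        ring
    _ = I + Real.exp (-12 * C * (11 / 10 * y)) * a' := by
        ring_nf
        rw [Real.exp_zero, one_mul]

theorem exists_le_mul_setIntegral_of_forall_le_exp_div_rpow_mul (hE : MeasurableSet E)
    (hE₀ : volume E ≠ 0) {T : ℝ} (hET : E ⊆ Ioo 0 T) {C ε k : ℝ} (hC : 0 < C) (hε : 0 < ε)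
    (hk : 0 < k) :
    ∃ τ ∈ Ioo 0 T, ∃ K > 0, ∀ a g : ℝ → ℝ, BddAbove ((fun t => |a t|) '' Ioo 0 T) →
      (∀ t, 0 ≤ g t) → IntegrableOn g E →
      (∀ s L σ : ℝ, 0 < s → 0 < L → L ≤ 1 → 0 ≤ σ →
        volume (Ioc s (s + L) \ E) ≤ ENNReal.ofReal (ε * L) →
        a (s + L) ≤ Real.exp (C / L ^ k) *
          (Real.exp (5 * σ) * (∫ t in E ∩ Ioc s (s + L), g t) + Real.exp (-σ) * a s)) →
      a τ ≤ K * ∫ t in E, g t := by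
  obtain ⟨t, L, ht, hL, htL, hLk, hdense⟩ :=
    exists_geometric_intervals hE hE₀ hET hε hk (q := 11 / 10) (by norm_num)
  set y : ℕ → ℝ := fun m => (11 / 10) ^ m * (1 / L 0 ^ k) with hy
  have hL₀ : 0 < 1 / L 0 ^ k := one_div_pos.2 (Real.rpow_pos_of_pos (hL 0).1 k)
  have hCy : ∀ m, C / L m ^ k = C * y m := fun m => by
    have := Real.rpow_pos_of_pos (hL m).1 k
    simp only [hy, ← hLk m]
    field_simp
  refine ⟨t 0, ht 0, Real.exp (12 * C * y 0), Real.exp_pos _, ?_⟩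
  intro a g ⟨K, hK⟩ hg hint hstep
  have hy_top : Filter.Tendsto y Filter.atTop Filter.atTop :=
    (tendsto_pow_atTop_atTop_of_one_lt (by norm_num)).atTop_mul_const hL₀
  have hv : Filter.Tendsto (fun m => Real.exp (-12 * C * y m) * a (t m)) Filter.atTop
      (nhds 0) := by
    refine (Real.tendsto_exp_atBot.comp (hy_top.const_mul_atTop_of_neg
      (by linarith))).zero_mul_isBoundedUnder_le ?_
    exact Filter.isBoundedUnder_of ⟨K, fun m => hK (mem_image_of_mem _ (ht m))⟩
  have hdecay : ∀ m, Real.exp (-12 * C * y m) * a (t m) ≤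
      (∫ r in E ∩ Ioc (t (m + 1)) (t m), g r) +
        Real.exp (-12 * C * y (m + 1)) * a (t (m + 1)) := fun m => by
    rw [show y (m + 1) = 11 / 10 * y m by simp only [hy]; ring]
    refine exp_neg_mul_le_add_exp_neg_mul (by positivity) fun σ hσ => ?_
    have h := hstep (t (m + 1)) (L m) σ (ht (m + 1)).1 (hL m).1 (hL m).2 hσ
    rw [← htL m, hCy m] at h
    exact h (hdense m)
  calc a (t 0) = Real.exp (12 * C * y 0) * (Real.exp (-12 * C * y 0) * a (t 0)) := by
        rw [← mul_assoc, ← Real.exp_add]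
        simp
    _ ≤ Real.exp (12 * C * y 0) * ∫ r in E, g r := by
        gcongr
        exact le_setIntegral_of_forall_le_setIntegral_add hE hg hint
          (antitone_nat_of_succ_le fun m => by linarith [htL m, (hL m).1]) hv hdecay

end Telescoping

/-! ### Observability from measurable sets -/

theorem exists_norm_le_of_norm_apply_le_mul_exp {X Y : Type*}
    [NormedAddCommGroup X] [NormedSpace ℝ X] [NormedAddCommGroup Y] [NormedSpace ℝ Y]
    {S : ℝ → X →L[ℝ] Y} {M α : ℝ} (hM : 0 ≤ M) (hα : 0 ≤ α)
    (hS : ∀ t : ℝ, 0 ≤ t → ∀ x : X, ‖S t x‖ ≤ M * Real.exp (α * t) * ‖x‖) (τ : ℝ) :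
    ∃ K, ∀ t ∈ Icc 0 τ, ‖S t‖ ≤ K :=
  ⟨M * Real.exp (α * τ), fun t ht => (S t).opNorm_le_bound (by positivity) fun x =>
    (hS t ht.1 x).trans (by gcongr; exact ht.2)⟩

namespace IsAnalyticSemigroup

variable {X U : Type*} [NormedAddCommGroup X] [NormedSpace ℝ X]
  [NormedAddCommGroup U] [NormedSpace ℝ U]
  {S : ℝ → X →L[ℝ] X} {D : Submodule ℝ X} {A : X →ₗ[ℝ] X} {B : X →ₗ[ℝ] U} {C₀ b : ℝ}
  (hS : IsAnalyticSemigroup S D A C₀)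
include hS

theorem apply_eq_zero_of_forall_le_one {x : X} (hx : ∀ L ∈ Ioc 0 1, S L x = 0) {t : ℝ}
    (ht : 0 < t) : S t x = 0 := by
  have hsplit : t = (t - min t 1) + min t 1 := by ring
  rw [hsplit, hS.apply_add (sub_nonneg.2 (min_le_left t 1)) (by positivity),
    hx _ ⟨lt_min ht one_pos, min_le_right t 1⟩, map_zero]

-- A non-integrable squared observation has Bochner integral `0`, which forces the orbit to vanish.
theorem integrableOn_norm_map_of_observable (hB : ∀ v ∈ D, ‖B v‖ ≤ b * (‖A v‖ + ‖v‖)) {x : X}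
    {κ : ℝ → ℝ} (hobs : ∀ L : ℝ, 0 < L → L ≤ 1 →
      ‖S L x‖ ^ 2 ≤ κ L * ∫ t in (0 : ℝ)..L, ‖B (S t x)‖ ^ 2) (T : ℝ) :
    IntegrableOn (fun t => ‖B (S t x)‖) (Ioo 0 T) := by
  have hcont := hS.continuousOn_norm_map hB x
  by_cases hzero : ∀ L ∈ Ioc 0 1, S L x = 0
  · refine integrableOn_zero.congr_fun (fun t ht => ?_) measurableSet_Ioo
    rw [hS.apply_eq_zero_of_forall_le_one hzero ht.1, map_zero, norm_zero]
  push Not at hzero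
  obtain ⟨L, ⟨hL, hL₁⟩, hne⟩ := hzero
  have hsq : IntegrableOn (fun t => ‖B (S t x)‖ ^ 2) (Ioc 0 L) := by
    rw [← intervalIntegrable_iff_integrableOn_Ioc_of_le hL.le]
    refine intervalIntegral.intervalIntegrable_of_integral_ne_zero fun h => ?_
    have hle := hobs L hL hL₁
    rw [h, mul_zero] at hle
    exact hne (norm_eq_zero.1 (pow_eq_zero_iff two_ne_zero |>.1 (le_antisymm hle (sq_nonneg _))))
  have hnear : IntegrableOn (fun t => ‖B (S t x)‖) (Ioc 0 L) :=
    ((memLp_two_iff_integrable_sq ((hcont.mono fun t ht => ht.1).aestronglyMeasurable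
      measurableSet_Ioc)).2 hsq).integrable one_le_two
  have hfar : IntegrableOn (fun t => ‖B (S t x)‖) (Icc L T) :=
    (hcont.mono fun t ht => hL.trans_le ht.1).integrableOn_Icc
  refine (hnear.union hfar).mono_set fun t ht => ?_
  exact (le_total t L).imp (fun h => ⟨ht.1, h⟩) fun h => ⟨h, ht.2.le⟩

end IsAnalyticSemigroup

theorem observability_from_measurable_sets_analytic_general {X U : Type*}
    [NormedAddCommGroup X] [NormedSpace ℝ X] [NormedAddCommGroup U] [NormedSpace ℝ U]
    {S : ℝ → X →L[ℝ] X} {D : Submodule ℝ X} {A : X →ₗ[ℝ] X} {B : X →ₗ[ℝ] U} {C₀ b d k : ℝ}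
    (hS : IsAnalyticSemigroup S D A C₀) (hB : ∀ v ∈ D, ‖B v‖ ≤ b * (‖A v‖ + ‖v‖)) (hb : 0 ≤ b)
    (hobs : IsObservableOnIntervals S D B d k) (hd : 0 ≤ d) (hk : 0 < k)
    {T : ℝ} {E : Set ℝ} (hE : MeasurableSet E) (hET : E ⊆ Ioo 0 T) (hE₀ : volume E ≠ 0) :
    ∃ C > 0, ∀ x : X, IntegrableOn (fun t => ‖B (S t x)‖) E →
      ‖S T x‖ ≤ C * ∫ t in E, ‖B (S t x)‖ := by
  obtain ⟨C, hC, ε, hε, hinterp⟩ := hS.norm_apply_le_exp_div_rpow_mul hB hb hd hk hobs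
  obtain ⟨τ, ⟨hτ, hτT⟩, K, hK, htele⟩ :=
    exists_le_mul_setIntegral_of_forall_le_exp_div_rpow_mul hE hE₀ hET hC hε hk
  obtain ⟨M, hM⟩ := hS.exists_norm_le T
  have hM₀ : 0 ≤ M := (norm_nonneg _).trans (hM 0 ⟨le_rfl, (hτ.trans hτT).le⟩)
  refine ⟨(M + 1) * K, by positivity, fun x hint => ?_⟩
  have hbdd : BddAbove ((fun t => |‖S t x‖|) '' Ioo 0 T) := by
    refine ⟨M * ‖x‖, forall_mem_image.2 fun t ht => ?_⟩
    rw [abs_norm]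
    exact (S t).le_of_opNorm_le (hM t (Ioo_subset_Icc_self ht)) x
  have hobserved : ‖S τ x‖ ≤ K * ∫ t in E, ‖B (S t x)‖ :=
    htele _ _ hbdd (fun _ => norm_nonneg _) hint fun s L σ hs hL hL₁ hσ hdense =>
      hinterp x s L σ E hs hL hL₁ hσ hE hdense
  calc ‖S T x‖ = ‖S (T - τ) (S τ x)‖ := by
        rw [← hS.apply_add (by linarith) hτ.le, sub_add_cancel]
    _ ≤ (M + 1) * ‖S τ x‖ :=
        (S _).le_of_opNorm_le ((hM _ ⟨by linarith, by linarith⟩).trans (by linarith)) _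
    _ ≤ (M + 1) * K * ∫ t in E, ‖B (S t x)‖ := by
        rw [mul_assoc]
        gcongr

/-- **Observability from measurable sets in time, analytic semigroup case.**
If `B` is admissible for the analytic semigroup `S` and the pair `(A,B)` satisfies the
observability inequality from time intervals, then for each `T > 0` and each measurable
set `E ⊆ (0,T)` of positive measure there is `C > 0` with
`‖S T u₀‖ ≤ C ∫_E ‖B (S t u₀)‖ dt` for all `u₀ ∈ D`. -/
theorem observability_from_measurable_sets_analytic
    {X U : Type*}
    [NormedAddCommGroup X] [InnerProductSpace ℝ X] [CompleteSpace X]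
    [NormedAddCommGroup U] [InnerProductSpace ℝ U] [CompleteSpace U]
    (S : ℝ → X →L[ℝ] X)
    (hS0 : S 0 = ContinuousLinearMap.id ℝ X)
    (hSsemi : ∀ t s : ℝ, 0 ≤ t → 0 ≤ s → S (t + s) = (S t).comp (S s))
    (hScont : ∀ x : X, ContinuousOn (fun t => S t x) (Set.Ici 0))
    (M α : ℝ) (hM : 1 ≤ M) (hα : 0 ≤ α)
    (hSbound : ∀ t : ℝ, 0 ≤ t → ∀ x : X, ‖S t x‖ ≤ M * Real.exp (α * t) * ‖x‖)
    (hSsmooth : ∀ x : X, ContDiffOn ℝ (⊤ : ℕ∞) (fun s => S s x) (Set.Ioi 0))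
    (C₀ : ℝ) (hC₀ : 1 ≤ C₀)
    (hSderiv : ∀ (x : X) (m : ℕ) (t : ℝ), 1 ≤ m → 0 < t → t ≤ 1 →
      ‖iteratedDeriv m (fun s => S s x) t‖ ≤ (C₀ * m / t) ^ m * ‖x‖)
    (D : Submodule ℝ X) (A : X →ₗ[ℝ] X) (B : X →ₗ[ℝ] U)
    (hD : ∀ (x : X) (m : ℕ) (t : ℝ), 0 < t → iteratedDeriv m (fun s => S s x) t ∈ D)
    (hA : ∀ (x : X) (m : ℕ) (t : ℝ), 0 < t →
      A (iteratedDeriv m (fun s => S s x) t) = iteratedDeriv (m + 1) (fun s => S s x) t)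
    (b : ℝ) (hb : 0 < b)
    (hB : ∀ v ∈ D, ‖B v‖ ≤ b * (‖A v‖ + ‖v‖))
    -- (a) admissibility of the observation operator B
    (hadm : ∀ τ : ℝ, 0 < τ → ∃ Cτ > 0, ∀ u₀ ∈ D,
      (∫ t in (0:ℝ)..τ, ‖B (S t u₀)‖ ^ 2) ≤ Cτ * ‖u₀‖ ^ 2)
    -- (b) observability inequality from time intervals
    (d k : ℝ) (hd : 0 < d) (hk : 0 < k)
    (hobs : ∀ L : ℝ, 0 < L → L ≤ 1 → ∀ u₀ ∈ D,
      ‖S L u₀‖ ^ 2 ≤ Real.exp (d / L ^ k) * ∫ t in (0:ℝ)..L, ‖B (S t u₀)‖ ^ 2)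
    (T : ℝ) (hT : 0 < T)
    (E : Set ℝ) (hE : MeasurableSet E) (hET : E ⊆ Set.Ioo 0 T)
    (hEpos : 0 < volume E) :
    ∃ C > 0, ∀ u₀ ∈ D, ‖S T u₀‖ ≤ C * ∫ t in E, ‖B (S t u₀)‖ := by
  have hS : IsAnalyticSemigroup S D A C₀ :=
    ⟨hSsemi, exists_norm_le_of_norm_apply_le_mul_exp (by linarith) hα hSbound, hSsmooth, hC₀,
      hSderiv, hD, hA⟩
  obtain ⟨C, hC, hobserve⟩ := observability_from_measurable_sets_analytic_general hS hB hb.le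
    (fun L hL hL₁ u₀ hu₀ _ => hobs L hL hL₁ u₀ hu₀) hd.le hk hE hET hEpos.ne'
  exact ⟨C, hC, fun u₀ hu₀ => hobserve u₀ <| (hS.integrableOn_norm_map_of_observable hB
    (fun L hL hL₁ => hobs L hL hL₁ u₀ hu₀) T).mono_set hET⟩
end

section
/- For each u₀ ∈ X, the function g(t) := ‖B S(t) u₀‖_U², t > 0, is real-analytic on (0,∞). Moreover, there exist constants K ≥ 1 and ρ ∈ (0,1), independent of u₀, such that for all s ≥ 0, all t with 0 < t - s ≤ 1, and all β ∈ ℕ: |g^{(β)}(t)| ≤ K (t-s)^{-2} β! (ρ (t-s))^{-β} ‖S(s) u₀‖_X². -/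
open MeasureTheory Set

/- A smooth function satisfying the Cauchy estimates `‖f⁽ⁿ⁾‖ ≤ C n! Rⁿ` locally uniformly is
analytic. These estimates survive bounded linear maps, time shifts and, at the price of doubling
`R`, bilinear maps. For an orbit of the semigroup they follow from the bounds `(C₀ n / t)ⁿ` via
`nⁿ ≤ n! eⁿ`. The unbounded observation is tamed by splitting `r = t - s` into halves:
`B S(t) u₀ = (B S(r/2)) (S(r/2) S(s) u₀)`, where `B S(r/2)` is a bounded operator of norm `O(1/r)`
and the remaining orbit satisfies Cauchy estimates with `R = O(1/r)`. Squaring the norm yields the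
factor `r⁻²`. -/

open Filter
open scoped Nat Topology ContDiff

theorem pow_self_le_factorial_mul_exp (n : ℕ) : (n : ℝ) ^ n ≤ n ! * Real.exp 1 ^ n := by
  have h := Real.pow_div_factorial_le_exp (x := n) n.cast_nonneg n
  rwa [div_le_iff₀' (by positivity), ← mul_one (n : ℝ), Real.exp_nat_mul, mul_one] at h

section CauchyBound

variable {E F G : Type*} [NormedAddCommGroup E] [NormedSpace ℝ E] [NormedAddCommGroup F]
  [NormedSpace ℝ F] [NormedAddCommGroup G] [NormedSpace ℝ G]

theorem norm_iteratedDeriv_bilinear_le (B : E →L[ℝ] F →L[ℝ] G) {f : ℝ → E} {g : ℝ → F} {x : ℝ}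
    {n : ℕ} (hf : ContDiffAt ℝ n f x) (hg : ContDiffAt ℝ n g x) :
    ‖iteratedDeriv n (fun t ↦ B (f t) (g t)) x‖ ≤ ‖B‖ * ∑ i ∈ Finset.range (n + 1),
      (n.choose i : ℝ) * ‖iteratedDeriv i f x‖ * ‖iteratedDeriv (n - i) g x‖ := by
  obtain ⟨u, hu, hfu⟩ := hf.contDiffOn le_rfl (by simp)
  obtain ⟨v, hv, hgv⟩ := hg.contDiffOn le_rfl (by simp)
  obtain ⟨w, hwuv, hw, hxw⟩ := mem_nhds_iff.1 (inter_mem hu hv)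
  simpa only [norm_iteratedFDerivWithin_eq_norm_iteratedDerivWithin,
    iteratedDerivWithin_of_isOpen hw hxw] using
    B.norm_iteratedFDerivWithin_le_of_bilinear (hfu.mono fun _ ht ↦ (hwuv ht).1)
      (hgv.mono fun _ ht ↦ (hwuv ht).2) hw.uniqueDiffOn hxw le_rfl

/-- Cauchy's estimates for all derivatives of `f` at the single point `x`, with `R` in the role of
the inverse of a radius of convergence. Smoothness of `f` is not part of the notion: where `f` is
not smooth, `iteratedDeriv` may take junk values. -/
def HasCauchyBoundAt (f : ℝ → F) (C R x : ℝ) : Prop :=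
  ∀ n : ℕ, ‖iteratedDeriv n f x‖ ≤ C * n ! * R ^ n

namespace HasCauchyBoundAt

variable {f : ℝ → E} {g : ℝ → F} {C C' R R' x : ℝ}

theorem norm_le (h : HasCauchyBoundAt f C R x) : ‖f x‖ ≤ C := by
  simpa using h 0

theorem mono (h : HasCauchyBoundAt f C R x) (hC : C ≤ C') (hR₀ : 0 ≤ R) (hR : R ≤ R') :
    HasCauchyBoundAt f C' R' x := fun n ↦ by
  have hC' : 0 ≤ C' := (norm_nonneg _).trans (h.norm_le.trans hC)
  exact (h n).trans (by gcongr)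

theorem congr_of_eventuallyEq {f' : ℝ → E} (h : HasCauchyBoundAt f C R x) (hf : f' =ᶠ[𝓝 x] f) :
    HasCauchyBoundAt f' C R x := fun n ↦ by
  rw [hf.iteratedDeriv_eq n]
  exact h n

theorem comp_sub_const {a : ℝ} (h : HasCauchyBoundAt f C R (x - a)) :
    HasCauchyBoundAt (fun t ↦ f (t - a)) C R x := fun n ↦ by
  rw [iteratedDeriv_comp_sub_const n f a]
  exact h n

theorem clm_comp (L : E →L[ℝ] F) (hf : ContDiffAt ℝ ∞ f x) (h : HasCauchyBoundAt f C R x) :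
    HasCauchyBoundAt (fun t ↦ L (f t)) (‖L‖ * C) R x := fun n ↦ by
  have hL : ‖iteratedDeriv n (L ∘ f) x‖ ≤ ‖L‖ * ‖iteratedDeriv n f x‖ := by
    simpa only [norm_iteratedFDeriv_eq_norm_iteratedDeriv] using
      L.norm_iteratedFDeriv_comp_left hf (by exact_mod_cast le_top : (n : ℕ∞ω) ≤ ∞)
  calc ‖iteratedDeriv n (L ∘ f) x‖ ≤ ‖L‖ * (C * n ! * R ^ n) := hL.trans (by gcongr; exact h n)
    _ = ‖L‖ * C * n ! * R ^ n := by ring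

theorem of_norm_iteratedDeriv_le_mul_pow {q : ℝ} (hq : 0 ≤ q)
    (h : ∀ n : ℕ, ‖iteratedDeriv n f x‖ ≤ C * (q * n) ^ n) :
    HasCauchyBoundAt f C (Real.exp 1 * q) x := fun n ↦ by
  have hC : 0 ≤ C := (norm_nonneg _).trans (by simpa using h 0)
  calc ‖iteratedDeriv n f x‖ ≤ C * (q ^ n * (n : ℝ) ^ n) := by simpa only [mul_pow] using h n
    _ ≤ C * (q ^ n * (n ! * Real.exp 1 ^ n)) := by
      gcongr
      exact pow_self_le_factorial_mul_exp n
    _ = C * n ! * (Real.exp 1 * q) ^ n := by ring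

theorem of_norm_iteratedDeriv_le_div_pow {A N q : ℝ} (hA : 1 ≤ A) (hq : 0 ≤ q)
    (hx : 0 ≤ x) (hf : ‖f x‖ ≤ A * N)
    (hderiv : ∀ n : ℕ, 1 ≤ n → ‖iteratedDeriv n f x‖ ≤ (q * n / x) ^ n * N) :
    HasCauchyBoundAt f (A * N) (Real.exp 1 * q / x) x := by
  have hN : 0 ≤ N :=
    (mul_nonneg_iff_of_pos_left (zero_lt_one.trans_le hA)).1 ((norm_nonneg _).trans hf)
  rw [mul_div_assoc]
  refine of_norm_iteratedDeriv_le_mul_pow (by positivity) fun n ↦ ?_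
  rcases n.eq_zero_or_pos with rfl | hn
  · simpa using hf
  calc ‖iteratedDeriv n f x‖ ≤ 1 * N * (q / x * n) ^ n := by
        rw [one_mul, mul_comm N, div_mul_eq_mul_div]
        exact hderiv n hn
    _ ≤ A * N * (q / x * n) ^ n := by gcongr

theorem bilinear (B : E →L[ℝ] F →L[ℝ] G) (hR : 0 ≤ R) (hf : ContDiffAt ℝ ∞ f x)
    (hg : ContDiffAt ℝ ∞ g x) (hfb : HasCauchyBoundAt f C R x) (hgb : HasCauchyBoundAt g C' R x) :
    HasCauchyBoundAt (fun t ↦ B (f t) (g t)) (‖B‖ * (C * C')) (2 * R) x := fun n ↦ by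
  have hC : 0 ≤ C := (norm_nonneg _).trans hfb.norm_le
  have hC' : 0 ≤ C' := (norm_nonneg _).trans hgb.norm_le
  have hterm : ∀ i ∈ Finset.range (n + 1),
      (n.choose i : ℝ) * ‖iteratedDeriv i f x‖ * ‖iteratedDeriv (n - i) g x‖ ≤
        C * C' * n ! * R ^ n := fun i hi ↦ by
    have hin : i ≤ n := Finset.mem_range_succ_iff.1 hi
    have hfact : (n.choose i : ℝ) * i ! * (n - i)! = n ! := by
      exact_mod_cast Nat.choose_mul_factorial_mul_factorial hin
    calc (n.choose i : ℝ) * ‖iteratedDeriv i f x‖ * ‖iteratedDeriv (n - i) g x‖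
        ≤ n.choose i * (C * i ! * R ^ i) * (C' * (n - i)! * R ^ (n - i)) := by
          gcongr
          exacts [hfb i, hgb (n - i)]
      _ = C * C' * (n.choose i * i ! * (n - i)!) * (R ^ i * R ^ (n - i)) := by ring
      _ = C * C' * n ! * R ^ n := by rw [hfact, pow_mul_pow_sub R hin]
  have hn : (n : ℝ) + 1 ≤ 2 ^ n := by exact_mod_cast n.lt_two_pow_self
  calc ‖iteratedDeriv n (fun t ↦ B (f t) (g t)) x‖
      ≤ ‖B‖ * ∑ i ∈ Finset.range (n + 1),
          (n.choose i : ℝ) * ‖iteratedDeriv i f x‖ * ‖iteratedDeriv (n - i) g x‖ :=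
        norm_iteratedDeriv_bilinear_le B (hf.of_le (by exact_mod_cast le_top))
          (hg.of_le (by exact_mod_cast le_top))
    _ ≤ ‖B‖ * ((n + 1) * (C * C' * n ! * R ^ n)) := by
      gcongr
      simpa using Finset.sum_le_card_nsmul _ _ _ hterm
    _ ≤ ‖B‖ * (2 ^ n * (C * C' * n ! * R ^ n)) := by gcongr
    _ = ‖B‖ * (C * C') * n ! * (2 * R) ^ n := by ring

theorem norm_sq {U : Type*} [NormedAddCommGroup U] [InnerProductSpace ℝ U] {f : ℝ → U}
    (hR : 0 ≤ R) (hf : ContDiffAt ℝ ∞ f x) (h : HasCauchyBoundAt f C R x) :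
    HasCauchyBoundAt (fun t ↦ ‖f t‖ ^ 2) (C ^ 2) (2 * R) x := by
  let B : U →L[ℝ] U →L[ℝ] ℝ := innerSL ℝ
  have hsq : (fun t ↦ ‖f t‖ ^ 2) = fun t ↦ B (f t) (f t) :=
    funext fun t ↦ (real_inner_self_eq_norm_sq (f t)).symm
  rw [hsq]
  refine (bilinear B hR hf hf h h).mono ?_ (by positivity) le_rfl
  calc ‖B‖ * (C * C) ≤ 1 * (C * C) :=
        mul_le_mul_of_nonneg_right (norm_innerSL_le ℝ) (mul_self_nonneg C)
    _ = C ^ 2 := by ring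

theorem abs_iteratedDeriv_le_zpow {g : ℝ → ℝ} {K c r : ℝ}
    (h : HasCauchyBoundAt g (K / r ^ 2) (c / r) x) (n : ℕ) :
    |iteratedDeriv n g x| ≤ K * r ^ (-(2 : ℤ)) * n ! * (1 / c * r) ^ (-(n : ℤ)) := by
  have hrate : (1 / c * r) ^ (-(n : ℤ)) = (c / r) ^ n := by
    rw [zpow_neg, zpow_natCast, ← inv_pow, one_div_mul_eq_div, inv_div]
  have hconst : r ^ (-(2 : ℤ)) = (r ^ 2)⁻¹ := by exact_mod_cast zpow_neg r 2
  rw [hrate, hconst, ← div_eq_mul_inv]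
  exact h n

end HasCauchyBoundAt

section Analyticity

variable {f : ℝ → F} {x₀ : ℝ}

theorem norm_sub_taylorSum_le [CompleteSpace F] {n : ℕ} {x K : ℝ}
    (hf : ∀ t ∈ uIcc x₀ x, ContDiffAt ℝ (n + 1 : ℕ) f t)
    (hK : ∀ t ∈ uIcc x₀ x, ‖iteratedDeriv (n + 1) f t‖ ≤ K) :
    ‖f x - ∑ k ∈ Finset.range (n + 1), ((k ! : ℝ)⁻¹ * (x - x₀) ^ k) • iteratedDeriv k f x₀‖ ≤
      K * |x - x₀| ^ (n + 1) / n ! := by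
  rcases eq_or_ne x₀ x with rfl | hne
  · simp [Finset.sum_range_succ']
  have hu : UniqueDiffOn ℝ (uIcc x₀ x) := uniqueDiffOn_uIcc hne
  have hderiv : ∀ k ≤ n + 1, ∀ t ∈ uIcc x₀ x,
      iteratedDerivWithin k f (uIcc x₀ x) t = iteratedDeriv k f t := fun k hk t ht ↦
    iteratedDerivWithin_eq_iteratedDeriv hu ((hf t ht).of_le (by exact_mod_cast hk)) ht
  have htaylor : taylorWithinEval f n (uIcc x₀ x) x₀ x =
      ∑ k ∈ Finset.range (n + 1), ((k ! : ℝ)⁻¹ * (x - x₀) ^ k) • iteratedDeriv k f x₀ := by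
    rw [taylor_within_apply]
    refine Finset.sum_congr rfl fun k hk ↦ ?_
    rw [hderiv k (Finset.mem_range.1 hk).le x₀ left_mem_uIcc]
  rw [← htaylor, taylor_integral_remainder fun t ht ↦ (hf t ht).contDiffWithinAt]
  have hintegrand : ∀ t ∈ uIoc x₀ x,
      ‖((x - t) ^ n / n ! : ℝ) • iteratedDerivWithin (n + 1) f (uIcc x₀ x) t‖ ≤
        |x - x₀| ^ n / n ! * K := fun t ht ↦ by
    have ht' : t ∈ uIcc x₀ x := uIoc_subset_uIcc ht
    rw [hderiv _ le_rfl t ht', norm_smul, norm_div, norm_pow, Real.norm_natCast, Real.norm_eq_abs]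
    have hdist : |x - t| ≤ |x - x₀| := abs_sub_right_of_mem_uIcc ht'
    gcongr
    exact hK t ht'
  calc _ ≤ |x - x₀| ^ n / n ! * K * |x - x₀| :=
        intervalIntegral.norm_integral_le_of_norm_le_const hintegrand
    _ = K * |x - x₀| ^ (n + 1) / n ! := by ring

theorem hasSum_taylor_of_hasCauchyBoundAt [CompleteSpace F] {C R x : ℝ} (hR : 0 ≤ R)
    (hf : ∀ t ∈ uIcc x₀ x, ContDiffAt ℝ ∞ f t)
    (hb : ∀ t ∈ uIcc x₀ x, HasCauchyBoundAt f C R t) (hx : R * |x - x₀| < 1) :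
    HasSum (fun n : ℕ ↦ ((n ! : ℝ)⁻¹ * (x - x₀) ^ n) • iteratedDeriv n f x₀) (f x) := by
  set q := R * |x - x₀|
  have hq : 0 ≤ q := by positivity
  have hsummable :
      Summable fun n : ℕ ↦ ‖((n ! : ℝ)⁻¹ * (x - x₀) ^ n) • iteratedDeriv n f x₀‖ := by
    refine Summable.of_nonneg_of_le (fun _ ↦ norm_nonneg _) (fun n ↦ ?_)
      ((summable_geometric_of_lt_one hq hx).mul_left C)
    rw [norm_smul, norm_mul, norm_inv, norm_pow, Real.norm_natCast, Real.norm_eq_abs]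
    calc _ ≤ (n ! : ℝ)⁻¹ * |x - x₀| ^ n * (C * n ! * R ^ n) := by
          gcongr
          exact hb x₀ left_mem_uIcc n
      _ = C * (R * |x - x₀|) ^ n := by
        rw [mul_pow]
        field_simp
  have hremainder : ∀ n : ℕ, ‖(∑ k ∈ Finset.range (n + 1),
      ((k ! : ℝ)⁻¹ * (x - x₀) ^ k) • iteratedDeriv k f x₀) - f x‖ ≤
        C * ((n + 1 : ℕ) * q ^ (n + 1)) := fun n ↦ by
    rw [norm_sub_rev]
    calc _ ≤ C * (n + 1)! * R ^ (n + 1) * |x - x₀| ^ (n + 1) / n ! :=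
          norm_sub_taylorSum_le (fun t ht ↦ (hf t ht).of_le (by exact_mod_cast le_top))
            fun t ht ↦ hb t ht (n + 1)
      _ = C * ((n + 1 : ℕ) * (R * |x - x₀|) ^ (n + 1)) := by
        rw [Nat.factorial_succ, mul_pow]
        push_cast
        field_simp
  rw [hasSum_iff_tendsto_nat_of_summable_norm hsummable, ← tendsto_add_atTop_iff_nat 1,
    tendsto_iff_norm_sub_tendsto_zero]
  refine squeeze_zero (fun _ ↦ norm_nonneg _) hremainder ?_
  simpa only [mul_zero] using
    ((tendsto_add_atTop_iff_nat 1).2 (tendsto_self_mul_const_pow_of_lt_one hq hx)).const_mul C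

theorem analyticAt_of_eventually_hasCauchyBoundAt [CompleteSpace F] {C R : ℝ} (hR : 0 ≤ R)
    (hf : ∀ᶠ t in 𝓝 x₀, ContDiffAt ℝ ∞ f t) (hb : ∀ᶠ t in 𝓝 x₀, HasCauchyBoundAt f C R t) :
    AnalyticAt ℝ f x₀ := by
  let p : FormalMultilinearSeries ℝ ℝ F := fun n ↦
    ContinuousMultilinearMap.mkPiRing ℝ (Fin n) ((n ! : ℝ)⁻¹ • iteratedDeriv n f x₀)
  have hcoeff : ∀ n, p.coeff n = (n ! : ℝ)⁻¹ • iteratedDeriv n f x₀ := fun n ↦ by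
    simp [p, FormalMultilinearSeries.coeff]
  obtain ⟨δ, hδ, hball⟩ := Metric.eventually_nhds_iff_ball.1 (hf.and hb)
  have hsmall : ∀ᶠ x in 𝓝 x₀, R * |x - x₀| < 1 :=
    ContinuousAt.eventually_lt (by fun_prop) continuousAt_const (by simp)
  refine ⟨p, hasFPowerSeriesAt_iff'.2 ?_⟩
  filter_upwards [hsmall, Metric.ball_mem_nhds x₀ hδ] with x hxR hxδ
  have hsub : uIcc x₀ x ⊆ Metric.ball x₀ δ := by
    rw [← segment_eq_uIcc]
    exact (convex_ball x₀ δ).segment_subset (Metric.mem_ball_self hδ) hxδ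
  convert hasSum_taylor_of_hasCauchyBoundAt hR (fun t ht ↦ (hball t (hsub ht)).1)
    (fun t ht ↦ (hball t (hsub ht)).2) hxR using 2 with n
  rw [hcoeff, smul_smul, mul_comm]

theorem analyticOnNhd_Ioi_of_hasCauchyBoundAt [CompleteSpace F] {P : ℝ → ℝ} {c : ℝ} (hc : 0 ≤ c)
    (hf : ContDiffOn ℝ ∞ f (Ioi 0))
    (hb : ∀ s t, 0 ≤ s → 0 < t - s → t - s ≤ 1 →
      HasCauchyBoundAt f (P s / (t - s) ^ 2) (c / (t - s)) t) :
    AnalyticOnNhd ℝ f (Ioi 0) := by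
  intro t₀ (ht₀ : 0 < t₀)
  obtain ⟨r, hr, hrt, hr1⟩ : ∃ r > 0, r ≤ t₀ / 2 ∧ r ≤ 1 / 2 :=
    ⟨min (t₀ / 2) (1 / 2), by positivity, min_le_left _ _, min_le_right _ _⟩
  refine analyticAt_of_eventually_hasCauchyBoundAt (C := P (t₀ - r) / (r / 2) ^ 2)
    (R := c / (r / 2)) (by positivity) ?_ ?_
  · filter_upwards [Ioi_mem_nhds ht₀] with t ht using hf.contDiffAt (Ioi_mem_nhds ht)
  · filter_upwards [Ioo_mem_nhds (show t₀ - r / 2 < t₀ by linarith)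
      (show t₀ < t₀ - r + 1 by linarith)] with t ⟨hlt, hgt⟩
    have hpos : 0 < t - (t₀ - r) := by linarith
    have hbt := hb (t₀ - r) t (by linarith) hpos (by linarith)
    have hP : 0 ≤ P (t₀ - r) := by
      have := mul_nonneg ((norm_nonneg _).trans hbt.norm_le) (sq_nonneg (t - (t₀ - r)))
      rwa [div_mul_cancel₀ _ (by positivity)] at this
    have hle : r / 2 ≤ t - (t₀ - r) := by linarith
    exact hbt.mono (by gcongr) (by positivity) (by gcongr)

end Analyticity

end CauchyBound

theorem norm_apply_le_of_graph_bound {X U : Type*} [NormedAddCommGroup X] [NormedSpace ℝ X]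
    [NormedAddCommGroup U] {B : X → U} {f : ℝ → X} {A N b q t : ℝ} (hb : 0 ≤ b) (ht : 0 < t)
    (ht1 : t ≤ 1) (hf : ‖f t‖ ≤ A * N) (hderiv : ‖deriv f t‖ ≤ q / t * N)
    (hB : ‖B (f t)‖ ≤ b * (‖deriv f t‖ + ‖f t‖)) :
    ‖B (f t)‖ ≤ b * (q + A) / t * N :=
  calc ‖B (f t)‖ ≤ b * (q / t * N + A * N / t) :=
        hB.trans (by gcongr; exact hf.trans (le_div_self ((norm_nonneg _).trans hf) ht ht1))
    _ = b * (q + A) / t * N := by ring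

section Semigroup

variable {X : Type*} [NormedAddCommGroup X] [NormedSpace ℝ X] {S : ℝ → X →L[ℝ] X}

section NormedTarget

variable {U : Type*} [NormedAddCommGroup U] [NormedSpace ℝ U] {B : X →ₗ[ℝ] U}

/-- `B S(r)` as a bounded operator, for a possibly unbounded observation `B` regularised by
`S r`. -/
noncomputable def observationCLM (B : X →ₗ[ℝ] U) (S : ℝ → X →L[ℝ] X) (r κ : ℝ)
    (hobs : ∀ x, ‖B (S r x)‖ ≤ κ * ‖x‖) : X →L[ℝ] U :=
  (B ∘ₗ (S r : X →ₗ[ℝ] X)).mkContinuous κ hobs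

theorem observation_eventuallyEq {s h t κ : ℝ} (u : X)
    (hS : ∀ t s : ℝ, 0 ≤ t → 0 ≤ s → S (t + s) = (S t).comp (S s))
    (hobs : ∀ x, ‖B (S h x)‖ ≤ κ * ‖x‖) (hs : 0 ≤ s) (hh : 0 ≤ h) (ht : s + h < t) :
    (fun τ ↦ B (S τ u)) =ᶠ[𝓝 t] fun τ ↦ observationCLM B S h κ hobs (S (τ - (s + h)) (S s u)) := by
  filter_upwards [Ioi_mem_nhds ht] with τ (hτ : s + h < τ)
  have hfactor : S τ = (S h).comp ((S (τ - (s + h))).comp (S s)) := by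
    rw [← hS _ s (by linarith) hs, ← hS h _ hh (by linarith)]
    congr 1
    ring
  rw [hfactor]
  rfl

theorem contDiffOn_observation {κ : ℝ → ℝ} (u : X)
    (hS : ∀ t s : ℝ, 0 ≤ t → 0 ≤ s → S (t + s) = (S t).comp (S s))
    (hSsmooth : ∀ x : X, ContDiffOn ℝ ∞ (fun τ ↦ S τ x) (Ioi 0))
    (hobs : ∀ r, 0 < r → r ≤ 1 → ∀ x, ‖B (S r x)‖ ≤ κ r * ‖x‖) :
    ContDiffOn ℝ ∞ (fun τ ↦ B (S τ u)) (Ioi 0) := fun t (ht : 0 < t) ↦ by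
  obtain ⟨h, hh, hh1, hht⟩ : ∃ h > 0, h ≤ 1 ∧ h < t :=
    ⟨min 1 (t / 2), by positivity, min_le_left _ _, (min_le_right _ _).trans_lt (by linarith)⟩
  have horbit : ContDiffAt ℝ ∞ (fun τ ↦ S (τ - (0 + h)) (S 0 u)) t :=
    ((hSsmooth (S 0 u)).contDiffAt (Ioi_mem_nhds (by linarith))).comp t
      (contDiffAt_id.sub contDiffAt_const)
  exact (((observationCLM B S h (κ h) (hobs h hh hh1)).contDiff.contDiffAt.comp t horbit
    ).congr_of_eventuallyEq
      (observation_eventuallyEq u hS _ le_rfl hh.le (by linarith))).contDiffWithinAt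

theorem hasCauchyBoundAt_observation {E q κ s t : ℝ} (u : X) (hq : 0 ≤ q) (hκ : 0 ≤ κ)
    (hS : ∀ t s : ℝ, 0 ≤ t → 0 ≤ s → S (t + s) = (S t).comp (S s))
    (hSsmooth : ∀ x : X, ContDiffOn ℝ ∞ (fun τ ↦ S τ x) (Ioi 0))
    (hScauchy : ∀ r, 0 < r → r ≤ 1 → ∀ x : X,
      HasCauchyBoundAt (fun τ ↦ S τ x) (E * ‖x‖) (q / r) r)
    (hobs : ∀ r, 0 < r → r ≤ 1 → ∀ x, ‖B (S r x)‖ ≤ κ / r * ‖x‖)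
    (hs : 0 ≤ s) (hst : 0 < t - s) (hst1 : t - s ≤ 1) :
    HasCauchyBoundAt (fun τ ↦ B (S τ u)) (2 * κ * E * ‖S s u‖ / (t - s)) (2 * q / (t - s)) t := by
  set h := (t - s) / 2 with hh
  have hpos : 0 < h := by positivity
  have hle : h ≤ 1 := by linarith
  have hmid : t - (s + h) = h := by ring
  have horbit : HasCauchyBoundAt (fun τ ↦ S (τ - (s + h)) (S s u)) (E * ‖S s u‖) (q / h) t := by
    apply HasCauchyBoundAt.comp_sub_const (f := fun τ ↦ S τ (S s u))
    rw [hmid]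
    exact hScauchy h hpos hle (S s u)
  have horbit_smooth : ContDiffAt ℝ ∞ (fun τ ↦ S (τ - (s + h)) (S s u)) t :=
    ((hSsmooth (S s u)).contDiffAt (Ioi_mem_nhds (by linarith))).comp t
      (contDiffAt_id.sub contDiffAt_const)
  have hobserved := (horbit.clm_comp (observationCLM B S h (κ / h) (hobs h hpos hle))
    horbit_smooth).congr_of_eventuallyEq
      (observation_eventuallyEq u hS _ hs hpos.le (by linarith))
  have hEu : 0 ≤ E * ‖S s u‖ := (norm_nonneg _).trans horbit.norm_le
  have hconst : ‖observationCLM B S h (κ / h) (hobs h hpos hle)‖ * (E * ‖S s u‖) ≤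
      2 * κ * E * ‖S s u‖ / (t - s) :=
    calc _ ≤ κ / h * (E * ‖S s u‖) := by
          gcongr
          exact LinearMap.mkContinuous_norm_le _ (by positivity) _
      _ = 2 * κ * E * ‖S s u‖ / (t - s) := by
        rw [hh]
        field_simp
  have hrate : q / h = 2 * q / (t - s) := by
    rw [hh]
    field_simp
  exact hobserved.mono hconst (by positivity) hrate.le

end NormedTarget

variable {U : Type*} [NormedAddCommGroup U] [InnerProductSpace ℝ U] {B : X →ₗ[ℝ] U}

theorem hasCauchyBoundAt_norm_sq_observation {E q κ s t : ℝ} (u : X) (hq : 0 ≤ q) (hκ : 0 ≤ κ)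
    (hS : ∀ t s : ℝ, 0 ≤ t → 0 ≤ s → S (t + s) = (S t).comp (S s))
    (hSsmooth : ∀ x : X, ContDiffOn ℝ ∞ (fun τ ↦ S τ x) (Ioi 0))
    (hScauchy : ∀ r, 0 < r → r ≤ 1 → ∀ x : X,
      HasCauchyBoundAt (fun τ ↦ S τ x) (E * ‖x‖) (q / r) r)
    (hobs : ∀ r, 0 < r → r ≤ 1 → ∀ x, ‖B (S r x)‖ ≤ κ / r * ‖x‖)
    (hs : 0 ≤ s) (hst : 0 < t - s) (hst1 : t - s ≤ 1) :
    HasCauchyBoundAt (fun τ ↦ ‖B (S τ u)‖ ^ 2)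
      ((2 * κ * E) ^ 2 * ‖S s u‖ ^ 2 / (t - s) ^ 2) (4 * q / (t - s)) t := by
  have hsmooth : ContDiffAt ℝ ∞ (fun τ ↦ B (S τ u)) t :=
    (contDiffOn_observation u hS hSsmooth hobs).contDiffAt (Ioi_mem_nhds (by linarith))
  have hsq := (hasCauchyBoundAt_observation u hq hκ hS hSsmooth hScauchy hobs hs hst hst1).norm_sq
    (by positivity) hsmooth
  exact hsq.mono (by rw [div_pow, mul_pow]) (by positivity) (le_of_eq (by ring))

theorem analyticity_of_observation_norm_general
    (hS : ∀ t s : ℝ, 0 ≤ t → 0 ≤ s → S (t + s) = (S t).comp (S s))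
    {E : ℝ} (hE : 1 ≤ E) (hSbound : ∀ t, 0 < t → t ≤ 1 → ∀ x : X, ‖S t x‖ ≤ E * ‖x‖)
    (hSsmooth : ∀ x : X, ContDiffOn ℝ ∞ (fun τ ↦ S τ x) (Ioi 0))
    {C₀ : ℝ} (hC₀ : 1 ≤ C₀)
    (hSderiv : ∀ (x : X) (m : ℕ) (t : ℝ), 1 ≤ m → 0 < t → t ≤ 1 →
      ‖iteratedDeriv m (fun τ ↦ S τ x) t‖ ≤ (C₀ * m / t) ^ m * ‖x‖)
    {b : ℝ} (hb : 0 ≤ b)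
    (hB : ∀ (x : X) (t : ℝ), 0 < t → t ≤ 1 →
      ‖B (S t x)‖ ≤ b * (‖deriv (fun τ ↦ S τ x) t‖ + ‖S t x‖)) :
    (∀ u₀ : X, AnalyticOnNhd ℝ (fun t ↦ ‖B (S t u₀)‖ ^ 2) (Ioi 0)) ∧
    ∃ K ≥ (1 : ℝ), ∃ ρ ∈ Ioo (0 : ℝ) 1, ∀ (u₀ : X) (s t : ℝ) (β : ℕ),
      0 ≤ s → 0 < t - s → t - s ≤ 1 →
      |iteratedDeriv β (fun τ ↦ ‖B (S τ u₀)‖ ^ 2) t| ≤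
        K * (t - s) ^ (-(2 : ℤ)) * β ! * (ρ * (t - s)) ^ (-(β : ℤ)) * ‖S s u₀‖ ^ 2 := by
  set q := Real.exp 1 * C₀
  set κ := b * (C₀ + E)
  have hq : 1 ≤ q := one_le_mul_of_one_le_of_one_le (Real.one_le_exp zero_le_one) hC₀
  have hκ : 0 ≤ κ := by positivity
  have hScauchy : ∀ r, 0 < r → r ≤ 1 → ∀ x : X,
      HasCauchyBoundAt (fun τ ↦ S τ x) (E * ‖x‖) (q / r) r := fun r hr hr1 x ↦
    .of_norm_iteratedDeriv_le_div_pow hE (by positivity) hr.le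
      (hSbound r hr hr1 x) fun m hm ↦ hSderiv x m r hm hr hr1
  have hobs : ∀ r, 0 < r → r ≤ 1 → ∀ x, ‖B (S r x)‖ ≤ κ / r * ‖x‖ := fun r hr hr1 x ↦
    norm_apply_le_of_graph_bound (f := fun τ ↦ S τ x) hb hr hr1 (hSbound r hr hr1 x)
      (by simpa using hSderiv x 1 r le_rfl hr hr1) (hB x r hr hr1)
  have hcauchy (u : X) (s t : ℝ) (hs : 0 ≤ s) (hst : 0 < t - s) (hst1 : t - s ≤ 1) :=
    hasCauchyBoundAt_norm_sq_observation u (by positivity) hκ hS hSsmooth hScauchy hobs hs hst hst1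
  refine ⟨fun u ↦ analyticOnNhd_Ioi_of_hasCauchyBoundAt (by positivity)
      ((contDiffOn_observation u hS hSsmooth hobs).norm_sq ℝ) (hcauchy u),
    max 1 ((2 * κ * E) ^ 2), le_max_left _ _, 1 / (4 * q),
    ⟨by positivity, (div_lt_one (by positivity)).2 (by linarith)⟩,
    fun u s t β hs hst hst1 ↦ ?_⟩
  calc |iteratedDeriv β (fun τ ↦ ‖B (S τ u)‖ ^ 2) t|
      ≤ (2 * κ * E) ^ 2 * ‖S s u‖ ^ 2 * (t - s) ^ (-(2 : ℤ)) * β ! *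
          (1 / (4 * q) * (t - s)) ^ (-(β : ℤ)) :=
        (hcauchy u s t hs hst hst1).abs_iteratedDeriv_le_zpow β
    _ = (2 * κ * E) ^ 2 * (t - s) ^ (-(2 : ℤ)) * β ! *
          (1 / (4 * q) * (t - s)) ^ (-(β : ℤ)) * ‖S s u‖ ^ 2 := by ring
    _ ≤ max 1 ((2 * κ * E) ^ 2) * (t - s) ^ (-(2 : ℤ)) * β ! *
          (1 / (4 * q) * (t - s)) ^ (-(β : ℤ)) * ‖S s u‖ ^ 2 := by
      gcongr
      exact le_max_right _ _

end Semigroup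

/-- **Analyticity and derivative bounds for `t ↦ ‖B S(t) u₀‖²`.**
For each `u₀`, the function `g(t) = ‖B (S t u₀)‖²` is real-analytic on `(0,∞)`, and there
are constants `K ≥ 1` and `ρ ∈ (0,1)`, independent of `u₀`, such that for `0 < t - s ≤ 1`,
`|g^{(β)}(t)| ≤ K (t-s)⁻² β! (ρ(t-s))^{-β} ‖S s u₀‖²`. -/
theorem analyticity_of_observation_norm
    {X U : Type*}
    [NormedAddCommGroup X] [InnerProductSpace ℝ X] [CompleteSpace X]
    [NormedAddCommGroup U] [InnerProductSpace ℝ U] [CompleteSpace U]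
    (S : ℝ → X →L[ℝ] X)
    (hS0 : S 0 = ContinuousLinearMap.id ℝ X)
    (hSsemi : ∀ t s : ℝ, 0 ≤ t → 0 ≤ s → S (t + s) = (S t).comp (S s))
    (hScont : ∀ x : X, ContinuousOn (fun t => S t x) (Set.Ici 0))
    (M α : ℝ) (hM : 1 ≤ M) (hα : 0 ≤ α)
    (hSbound : ∀ t : ℝ, 0 ≤ t → ∀ x : X, ‖S t x‖ ≤ M * Real.exp (α * t) * ‖x‖)
    (hSsmooth : ∀ x : X, ContDiffOn ℝ (⊤ : ℕ∞) (fun s => S s x) (Set.Ioi 0))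
    (C₀ : ℝ) (hC₀ : 1 ≤ C₀)
    (hSderiv : ∀ (x : X) (m : ℕ) (t : ℝ), 1 ≤ m → 0 < t → t ≤ 1 →
      ‖iteratedDeriv m (fun s => S s x) t‖ ≤ (C₀ * m / t) ^ m * ‖x‖)
    (D : Submodule ℝ X) (A : X →ₗ[ℝ] X) (B : X →ₗ[ℝ] U)
    (hD : ∀ (x : X) (m : ℕ) (t : ℝ), 0 < t → iteratedDeriv m (fun s => S s x) t ∈ D)
    (hA : ∀ (x : X) (m : ℕ) (t : ℝ), 0 < t →
      A (iteratedDeriv m (fun s => S s x) t) = iteratedDeriv (m + 1) (fun s => S s x) t)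
    (b : ℝ) (hb : 0 < b)
    (hB : ∀ v ∈ D, ‖B v‖ ≤ b * (‖A v‖ + ‖v‖)) :
    (∀ u₀ : X, AnalyticOnNhd ℝ (fun t => ‖B (S t u₀)‖ ^ 2) (Set.Ioi 0)) ∧
    ∃ K ≥ (1:ℝ), ∃ ρ ∈ Set.Ioo (0:ℝ) 1, ∀ (u₀ : X) (s t : ℝ) (β : ℕ),
      0 ≤ s → 0 < t - s → t - s ≤ 1 →
      |iteratedDeriv β (fun τ => ‖B (S τ u₀)‖ ^ 2) t| ≤
        K * (t - s) ^ (-(2:ℤ)) * (Nat.factorial β) * (ρ * (t - s)) ^ (-(β : ℤ))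
          * ‖S s u₀‖ ^ 2 := by
  have hSbound₁ : ∀ t, 0 < t → t ≤ 1 → ∀ x, ‖S t x‖ ≤ M * Real.exp α * ‖x‖ :=
    fun t ht ht1 x ↦ (hSbound t ht.le x).trans (by gcongr; exact mul_le_of_le_one_right hα ht1)
  have hAderiv : ∀ x t, 0 < t → A (S t x) = deriv (fun τ ↦ S τ x) t :=
    fun x t ht ↦ by simpa using hA x 0 t ht
  exact analyticity_of_observation_norm_general hSsemi
    (one_le_mul_of_one_le_of_one_le hM (Real.one_le_exp hα)) hSbound₁ hSsmooth hC₀ hSderiv hb.le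
    fun x t ht _ ↦ by simpa [hAderiv x t ht] using hB _ (hD x 0 t ht)
end

section
/- For every ρ ∈ (0,1] and every r ∈ (0,1] there exist constants C ≥ 1 and θ ∈ (0,1), depending only on ρ and r, with the following property: whenever a ∈ ℝ, s > 0, M > 0, f : [a, a+s] → ℝ is infinitely differentiable and satisfies |f^{(β)}(x)| ≤ M β! (sρ)^{-β} for all x ∈ [a, a+s] and all β ∈ ℕ, and Ê ⊆ [a, a+s] is a Lebesgue-measurable set with |Ê| ≥ r s, then sup_{x ∈ [a,a+s]} |f(x)| ≤ C M^{1-θ} ( (1/|Ê|) ∫_Ê |f(x)| dx )^θ. -/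
open MeasureTheory Set

open scoped Nat ContDiff

/-! On an interval much shorter than the radius of analyticity, the Taylor polynomial of degree `n`
approximates `f` up to an error exponentially small in `n`. A Remez inequality, obtained by Lagrange
interpolation at well-separated points of the set where `f` is small, carries the smallness over to
the whole interval at the price of a factor exponential in `n`; choosing the best `n` gives a Hölder
estimate. An estimate on intervals of length `δ` yields one on intervals of length `2δ`: the set has
the same density in one of the two halves, so `f` is small there, hence on the concentric interval
of length `δ`, which meets that half in half its length, and hence on both halves. Finitely many
doublings reach the given interval. By Markov's inequality, `|f|` is at most twice its average over
`E` on at least half of `E`. -/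

section SeparatedPoints

theorem lipschitzWith_volumeReal_inter_Iic {F : Set ℝ} (hF : volume F ≠ ⊤) :
    LipschitzWith 1 fun x ↦ volume.real (F ∩ Iic x) := by
  refine LipschitzWith.of_le_add fun x y ↦ ?_
  have hsub : F ∩ Iic x ⊆ F ∩ Iic y ∪ Icc y x := fun z hz ↦
    (le_total z y).imp (fun h ↦ ⟨hz.1, h⟩) fun h ↦ ⟨h, hz.2⟩
  have hfin : volume (F ∩ Iic y ∪ Icc y x) ≠ ⊤ :=
    measure_union_ne_top (measure_ne_top_of_subset inter_subset_left hF) measure_Icc_lt_top.ne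
  calc volume.real (F ∩ Iic x)
      ≤ volume.real (F ∩ Iic y) + volume.real (Icc y x) :=
        (measureReal_mono hsub hfin).trans (measureReal_union_le _ _)
    _ ≤ volume.real (F ∩ Iic y) + dist x y := by
        rw [Real.volume_real_Icc, Real.dist_eq]
        gcongr
        exact max_le (le_abs_self _) (abs_nonneg _)

theorem exists_mem_volumeReal_inter_Iic_eq {F : Set ℝ} (hF : IsCompact F) {t : ℝ}
    (ht : t ∈ Ioc 0 (volume.real F)) : ∃ x ∈ F, volume.real (F ∩ Iic x) = t := by
  obtain ⟨l, hl⟩ := hF.bddBelow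
  obtain ⟨u, hu⟩ := hF.bddAbove
  have hbelow : volume.real (F ∩ Iic l) ≤ t := by
    have hsub : F ∩ Iic l ⊆ {l} := fun z hz ↦ le_antisymm hz.2 (hl hz.1)
    simpa [measureReal_def, measure_mono_null hsub Real.volume_singleton] using ht.1.le
  have habove : t ≤ volume.real (F ∩ Iic u) := by
    rw [inter_eq_left.2 (show F ⊆ Iic u from hu)]; exact ht.2
  obtain ⟨x, hx⟩ := mem_range_of_exists_le_of_exists_ge
    (lipschitzWith_volumeReal_inter_Iic hF.measure_ne_top).continuous ⟨l, hbelow⟩ ⟨u, habove⟩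
  have hne : (F ∩ Iic x).Nonempty := nonempty_of_measureReal_ne_zero (hx.trans_ne ht.1.ne')
  obtain ⟨z, hz, hmax⟩ := (hF.inter_right isClosed_Iic).exists_isGreatest hne
  have hset : F ∩ Iic z = F ∩ Iic x :=
    Subset.antisymm (inter_subset_inter_right F (Iic_subset_Iic.2 hz.2)) fun y hy ↦ ⟨hy.1, hmax hy⟩
  exact ⟨z, hz.1, by rw [hset]; exact hx⟩

theorem exists_separated_points {F : Set ℝ} (hF : IsCompact F) {h : ℝ} (hh : 0 < h) {n : ℕ}
    (hn : n * h ≤ volume.real F) :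
    ∃ x : ℕ → ℝ, (∀ i < n, x i ∈ F) ∧ ∀ i < n, ∀ j < n, |(i : ℝ) - j| * h ≤ |x i - x j| := by
  have hlevel : ∀ i : ℕ, ∃ x, i < n → x ∈ F ∧ volume.real (F ∩ Iic x) = (i + 1) * h := by
    intro i
    rcases lt_or_ge i n with hi | hi
    · have hin : (i : ℝ) + 1 ≤ n := mod_cast hi
      obtain ⟨x, hx⟩ := exists_mem_volumeReal_inter_Iic_eq hF (t := (i + 1) * h)
        ⟨by positivity, (by gcongr : (i + 1) * h ≤ n * h).trans hn⟩
      exact ⟨x, fun _ ↦ hx⟩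
    · exact ⟨0, fun hi' ↦ absurd hi' hi.not_gt⟩
  choose x hx using hlevel
  refine ⟨x, fun i hi ↦ (hx i hi).1, fun i hi j hj ↦ ?_⟩
  have hlip := (lipschitzWith_volumeReal_inter_Iic hF.measure_ne_top).dist_le_mul (x i) (x j)
  rwa [(hx i hi).2, (hx j hj).2, Real.dist_eq, Real.dist_eq, NNReal.coe_one, one_mul, ← sub_mul,
    add_sub_add_right_eq_sub, abs_mul, abs_of_pos hh] at hlip

end SeparatedPoints

section Remez

open Finset in
theorem prod_erase_abs_natCast_sub (i k : ℕ) :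
    ∏ j ∈ (range (i + k + 1)).erase i, |(i : ℝ) - j| = i ! * k ! := by
  have hsplit : (range (i + k + 1)).erase i =
      range i ∪ (range k).map (addLeftEmbedding (i + 1)) := by
    ext j
    simp only [mem_erase, Finset.mem_range, Finset.mem_union, Finset.mem_map,
      addLeftEmbedding_apply]
    refine ⟨fun h ↦ ?_, ?_⟩
    · rcases lt_or_gt_of_ne h.1 with hj | hj
      · exact .inl hj
      · exact .inr ⟨j - (i + 1), by omega, by omega⟩
    · rintro (hj | ⟨l, hl, rfl⟩) <;> omega
  have hdisj : Disjoint (range i) ((range k).map (addLeftEmbedding (i + 1))) := by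
    simp only [Finset.disjoint_left, Finset.mem_range, Finset.mem_map, addLeftEmbedding_apply]
    rintro j hj ⟨l, -, rfl⟩
    omega
  rw [hsplit, prod_union hdisj, prod_map]
  congr 1
  · rw [← Nat.descFactorial_self, Nat.descFactorial_eq_prod_range, Nat.cast_prod]
    refine prod_congr rfl fun j hj ↦ ?_
    have hji : j ≤ i := (Finset.mem_range.1 hj).le
    rw [Nat.cast_sub hji, abs_of_nonneg (sub_nonneg.2 (Nat.cast_le.2 hji))]
  · rw [← prod_range_add_one_eq_factorial, Nat.cast_prod]
    refine prod_congr rfl fun j _ ↦ ?_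
    rw [addLeftEmbedding_apply, abs_sub_comm, abs_of_nonneg] <;> push_cast <;> linarith

theorem sum_inv_factorial_mul_factorial (n : ℕ) :
    ∑ i ∈ Finset.range (n + 1), ((i ! : ℝ) * (n - i)!)⁻¹ = 2 ^ n / n ! := by
  have hchoose : ∑ i ∈ Finset.range (n + 1), (n.choose i : ℝ) = 2 ^ n :=
    mod_cast Nat.sum_range_choose n
  rw [← hchoose, Finset.sum_div]
  refine Finset.sum_congr rfl fun i hi ↦ ?_
  rw [Nat.cast_choose ℝ (Finset.mem_range_succ_iff.1 hi)]
  field_simp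

variable {n : ℕ} {x : ℕ → ℝ} {p δ h y : ℝ}

open Polynomial in
theorem abs_eval_lagrangeBasis_le (hh : 0 < h)
    (hmem : ∀ i < n + 1, x i ∈ Icc p (p + δ))
    (hsep : ∀ i < n + 1, ∀ j < n + 1, |(i : ℝ) - j| * h ≤ |x i - x j|)
    (hy : y ∈ Icc p (p + δ)) {i : ℕ} (hi : i ≤ n) :
    |(Lagrange.basis (Finset.range (n + 1)) x i).eval y| ≤
      (δ / h) ^ n * ((i ! : ℝ) * (n - i)!)⁻¹ := by
  have hfactor : ∀ j ∈ (Finset.range (n + 1)).erase i,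
      |(Lagrange.basisDivisor (x i) (x j)).eval y| ≤ δ / h * |(i : ℝ) - j|⁻¹ := by
    intro j hj
    obtain ⟨hji, hjn⟩ := Finset.mem_erase.1 hj
    rw [Finset.mem_range] at hjn
    have hij : 0 < |(i : ℝ) - j| := abs_pos.2 (sub_ne_zero.2 (mod_cast hji.symm))
    have hdist : |y - x j| ≤ δ := by
      simpa using abs_sub_le_of_le_of_le hy.1 hy.2 (hmem j hjn).1 (hmem j hjn).2
    simp only [Lagrange.basisDivisor, eval_mul, eval_C, eval_sub, eval_X, abs_mul, abs_inv]
    calc |x i - x j|⁻¹ * |y - x j| ≤ (|(i : ℝ) - j| * h)⁻¹ * δ := by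
          gcongr
          exact hsep i (by omega) j hjn
      _ = δ / h * |(i : ℝ) - j|⁻¹ := by field_simp
  have hnodes : ∏ j ∈ (Finset.range (n + 1)).erase i, |(i : ℝ) - j| = i ! * (n - i)! := by
    rw [← prod_erase_abs_natCast_sub, Nat.add_sub_cancel' hi]
  calc |(Lagrange.basis (Finset.range (n + 1)) x i).eval y|
      = ∏ j ∈ (Finset.range (n + 1)).erase i, |(Lagrange.basisDivisor (x i) (x j)).eval y| := by
        rw [Lagrange.basis, eval_prod, Finset.abs_prod]
    _ ≤ ∏ j ∈ (Finset.range (n + 1)).erase i, (δ / h * |(i : ℝ) - j|⁻¹) :=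
        Finset.prod_le_prod (fun _ _ ↦ abs_nonneg _) hfactor
    _ = (δ / h) ^ n * ((i ! : ℝ) * (n - i)!)⁻¹ := by
        rw [Finset.prod_mul_distrib, Finset.prod_const, Finset.prod_inv_distrib, hnodes,
          Finset.card_erase_of_mem (Finset.mem_range_succ_iff.2 hi), Finset.card_range,
          Nat.succ_sub_one]

theorem abs_eval_le_of_separated {P : Polynomial ℝ} (hP : P.natDegree ≤ n) (hh : 0 < h)
    (hmem : ∀ i < n + 1, x i ∈ Icc p (p + δ))
    (hsep : ∀ i < n + 1, ∀ j < n + 1, |(i : ℝ) - j| * h ≤ |x i - x j|)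
    {η : ℝ} (hη : ∀ i < n + 1, |P.eval (x i)| ≤ η) (hy : y ∈ Icc p (p + δ)) :
    |P.eval y| ≤ (2 * (δ / h)) ^ n / n ! * η := by
  have hinj : Set.InjOn x (Finset.range (n + 1)) := by
    intro i hi j hj hij
    have hle := hsep i (Finset.mem_range.1 hi) j (Finset.mem_range.1 hj)
    rw [hij, sub_self, abs_zero] at hle
    have hzero : |(i : ℝ) - j| ≤ 0 := nonpos_of_mul_nonpos_left hle hh
    exact Nat.cast_injective (sub_eq_zero.1 (abs_nonpos_iff.1 hzero))
  have hdeg : P.degree < (Finset.range (n + 1)).card := by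
    rw [Finset.card_range]
    exact (Polynomial.degree_le_of_natDegree_le hP).trans_lt (mod_cast n.lt_succ_self)
  have hη0 : 0 ≤ η := (abs_nonneg _).trans (hη 0 n.succ_pos)
  calc |P.eval y|
      = |∑ i ∈ Finset.range (n + 1), P.eval (x i) *
          (Lagrange.basis (Finset.range (n + 1)) x i).eval y| := by
        conv_lhs => rw [Lagrange.eq_interpolate hinj hdeg]
        simp only [Lagrange.interpolate_apply, Polynomial.eval_finsetSum, Polynomial.eval_mul,
          Polynomial.eval_C]
    _ ≤ ∑ i ∈ Finset.range (n + 1), η * ((δ / h) ^ n * ((i ! : ℝ) * (n - i)!)⁻¹) := by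
        refine (Finset.abs_sum_le_sum_abs _ _).trans (Finset.sum_le_sum fun i hi ↦ ?_)
        rw [abs_mul]
        exact mul_le_mul (hη i (Finset.mem_range.1 hi))
          (abs_eval_lagrangeBasis_le hh hmem hsep hy (Finset.mem_range_succ_iff.1 hi))
          (abs_nonneg _) hη0
    _ = (2 * (δ / h)) ^ n / n ! * η := by
        rw [← Finset.mul_sum, ← Finset.mul_sum, sum_inv_factorial_mul_factorial, mul_pow]
        ring

theorem abs_eval_le_remez {P : Polynomial ℝ} (hP : P.natDegree ≤ n) {F : Set ℝ}
    (hF : IsCompact F) (hFp : F ⊆ Icc p (p + δ)) {c η : ℝ} (hc : 0 < c) (hδ : 0 < δ)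
    (hvol : c * δ ≤ volume.real F) (hη : ∀ x ∈ F, |P.eval x| ≤ η) (hy : y ∈ Icc p (p + δ)) :
    |P.eval y| ≤ Real.exp 1 * (2 * Real.exp 1 / c) ^ n * η := by
  set h := c * δ / (n + 1 : ℕ) with hh
  have hh0 : 0 < h := by positivity
  obtain ⟨x, hxF, hsep⟩ := exists_separated_points hF hh0 (n := n + 1)
    (by rwa [hh, mul_div_cancel₀ _ (by positivity)])
  have hη0 : 0 ≤ η := (abs_nonneg _).trans (hη _ (hxF 0 n.succ_pos))
  calc |P.eval y| ≤ (2 * (δ / h)) ^ n / n ! * η :=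
        abs_eval_le_of_separated hP hh0 (fun i hi ↦ hFp (hxF i hi)) hsep
          (fun i hi ↦ hη _ (hxF i hi)) hy
    _ = (2 / c) ^ n * ((n + 1 : ℝ) ^ n / n !) * η := by
        have hratio : 2 * (δ / h) = 2 / c * (n + 1) := by
          rw [hh]; push_cast; field_simp
        rw [hratio, mul_pow, mul_div_assoc]
    _ ≤ (2 / c) ^ n * Real.exp (n + 1) * η := by
        gcongr
        exact Real.pow_div_factorial_le_exp _ (by positivity) n
    _ = Real.exp 1 * (2 * Real.exp 1 / c) ^ n * η := by
        rw [Real.exp_add, ← Real.exp_one_pow, mul_div_right_comm, mul_pow]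
        ring

end Remez

section CauchyBounds

/-- Quantitative analyticity on `S` with size `M` and radius `R`: `f` is smooth on `S` and satisfies
the Cauchy estimates `|f^{(k)}| ≤ M k! R^{-k}` there, the derivatives being taken within `S`. -/
structure CauchyBoundsOn (f : ℝ → ℝ) (M R : ℝ) (S : Set ℝ) : Prop where
  contDiffOn : ContDiffOn ℝ ∞ f S
  abs_iteratedDerivWithin_le : ∀ k : ℕ, ∀ x ∈ S, |iteratedDerivWithin k f S x| ≤ M * k ! / R ^ k

namespace CauchyBoundsOn

variable {f : ℝ → ℝ} {M R : ℝ} {S : Set ℝ}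

theorem abs_le (hf : CauchyBoundsOn f M R S) {x : ℝ} (hx : x ∈ S) : |f x| ≤ M := by
  simpa using hf.abs_iteratedDerivWithin_le 0 x hx

theorem mono {T : Set ℝ} (hf : CauchyBoundsOn f M R S) (hTS : T ⊆ S) (hT : UniqueDiffOn ℝ T)
    (hS : UniqueDiffOn ℝ S) : CauchyBoundsOn f M R T where
  contDiffOn := hf.contDiffOn.mono hTS
  abs_iteratedDerivWithin_le k x hx := by
    have hderiv : iteratedDerivWithin k f T x = iteratedDerivWithin k f S x := by
      simp only [iteratedDerivWithin]
      rw [iteratedFDerivWithin_subset hTS hT hS (hf.contDiffOn.of_le (mod_cast le_top)) hx]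
    exact hderiv ▸ hf.abs_iteratedDerivWithin_le k x (hTS hx)

theorem const_smul (hf : CauchyBoundsOn f M R S) (c : ℝ) :
    CauchyBoundsOn (c • f) (|c| * M) R S where
  contDiffOn := hf.contDiffOn.const_smul c
  abs_iteratedDerivWithin_le k x hx := by
    rw [iteratedDerivWithin_const_smul_field, smul_eq_mul, abs_mul, mul_assoc, mul_div_assoc]
    exact mul_le_mul_of_nonneg_left (hf.abs_iteratedDerivWithin_le k x hx) (abs_nonneg c)

theorem abs_sub_taylorWithinEval_le {p δ : ℝ} (hf : CauchyBoundsOn f M R (Icc p (p + δ)))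
    (hR : 0 < R) (hδ : 0 < δ) (n : ℕ) {x : ℝ} (hx : x ∈ Icc p (p + δ)) :
    |f x - taylorWithinEval f n (Icc p (p + δ)) p x| ≤ M * (2 * (δ / R)) ^ (n + 1) := by
  have hM : 0 ≤ M := (abs_nonneg _).trans (hf.abs_le hx)
  have hxp : 0 ≤ x - p := sub_nonneg.2 hx.1
  calc |f x - taylorWithinEval f n (Icc p (p + δ)) p x|
      ≤ M * (n + 1)! / R ^ (n + 1) * (x - p) ^ (n + 1) / n ! :=
        taylor_mean_remainder_bound (by linarith) (hf.contDiffOn.of_le (mod_cast le_top)) hx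
          (hf.abs_iteratedDerivWithin_le (n + 1))
    _ ≤ M * (n + 1)! / R ^ (n + 1) * δ ^ (n + 1) / n ! := by
        gcongr
        linarith [hx.2]
    _ = M * ((n + 1 : ℕ) * (δ / R) ^ (n + 1)) := by
        rw [Nat.factorial_succ, div_pow]
        push_cast
        field_simp
    _ ≤ M * (2 ^ (n + 1) * (δ / R) ^ (n + 1)) := by
        gcongr
        exact mod_cast Nat.lt_two_pow_self.le
    _ = M * (2 * (δ / R)) ^ (n + 1) := by rw [mul_pow]

end CauchyBoundsOn

open Polynomial in
theorem exists_polynomial_eval_eq_taylorWithinEval (f : ℝ → ℝ) (n : ℕ) (S : Set ℝ) (p : ℝ) :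
    ∃ P : ℝ[X], P.natDegree ≤ n ∧ ∀ x, P.eval x = taylorWithinEval f n S p x := by
  refine ⟨∑ k ∈ Finset.range (n + 1),
    C ((k ! : ℝ)⁻¹ * iteratedDerivWithin k f S p) * (X - C p) ^ k, ?_, fun x ↦ ?_⟩
  · refine natDegree_sum_le_of_forall_le _ _ fun k hk ↦ ?_
    calc (C ((k ! : ℝ)⁻¹ * iteratedDerivWithin k f S p) * (X - C p) ^ k).natDegree
        ≤ ((X - C p) ^ k).natDegree := natDegree_C_mul_le _ _
      _ = k := by rw [natDegree_pow, natDegree_X_sub_C, mul_one]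
      _ ≤ n := Finset.mem_range_succ_iff.1 hk
  · simp only [taylor_within_apply, eval_finsetSum, eval_mul, eval_C, eval_pow, eval_sub, eval_X,
      smul_eq_mul, mul_right_comm]

end CauchyBounds

section Optimization

theorem le_mul_rpow_of_forall_le {B K u η : ℝ} (hB : 1 < B) (hK : 0 ≤ K) (hη : 0 ≤ η) (huK : u ≤ K)
    (hu : ∀ n : ℕ, u ≤ K * (B ^ n * η + (1 / 2) ^ n)) :
    u ≤ 4 * K * η ^ Real.logb (2 * B) 2 := by
  have h2B : 1 < 2 * B := by linarith
  have hθ : 0 < Real.logb (2 * B) 2 := Real.logb_pos h2B one_lt_two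
  rcases hη.eq_or_lt with rfl | hη0
  · have hlim : Filter.Tendsto (fun n : ℕ ↦ K * (1 / 2 : ℝ) ^ n) Filter.atTop (nhds (K * 0)) :=
      (tendsto_pow_atTop_nhds_zero_of_lt_one (by norm_num) (by norm_num)).const_mul K
    rw [Real.zero_rpow hθ.ne', mul_zero]
    rw [mul_zero] at hlim
    exact ge_of_tendsto' hlim fun n ↦ by simpa using hu n
  rcases le_total 1 η with hη1 | hη1
  · nlinarith [Real.one_le_rpow hη1 hθ.le]
  obtain ⟨n, hn, hn'⟩ := exists_nat_pow_near ((one_le_inv₀ hη0).2 hη1) h2B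
  have hpoly : B ^ n * η ≤ (1 / 2) ^ n := by
    have hmul : (2 * B) ^ n * η ≤ 1 := by
      simpa only [inv_mul_cancel₀ hη0.ne'] using mul_le_mul_of_nonneg_right hn hη
    calc B ^ n * η = (1 / 2) ^ n * ((2 * B) ^ n * η) := by
          rw [← mul_assoc, ← mul_pow, one_div, inv_mul_cancel_left₀ two_ne_zero]
      _ ≤ (1 / 2) ^ n := mul_le_of_le_one_right (by positivity) hmul
  have htail : (1 / 2) ^ (n + 1) ≤ η ^ Real.logb (2 * B) 2 := by
    have hpow : ((2 * B) ^ (n + 1)) ^ Real.logb (2 * B) 2 = 2 ^ (n + 1) := by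
      rw [← Real.rpow_natCast, ← Real.rpow_mul (by positivity), mul_comm (Nat.cast _),
        Real.rpow_mul (by positivity), Real.rpow_logb (by positivity) h2B.ne' two_pos,
        Real.rpow_natCast]
    have hle := Real.rpow_le_rpow (by positivity) hn'.le hθ.le
    rw [hpow, Real.inv_rpow hη] at hle
    rw [one_div, inv_pow]
    exact inv_le_of_inv_le₀ (by positivity) hle
  calc u ≤ K * (B ^ n * η + (1 / 2) ^ n) := hu n
    _ ≤ K * ((1 / 2) ^ n + (1 / 2) ^ n) := by gcongr
    _ = 4 * K * (1 / 2) ^ (n + 1) := by ring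
    _ ≤ 4 * K * η ^ Real.logb (2 * B) 2 := by gcongr

end Optimization

section Propagation

/-- Smallness propagates at density `c` on intervals of length at most `L` times the radius of
analyticity, with Hölder constants `C` and `θ`: a bound `|f| ≤ η` on a proportion `c` of such an
interval forces `|f| ≤ C η^θ` on all of it. The size of `f` is normalized to `M = 1`. -/
def PropagatesWith (c L C θ : ℝ) : Prop :=
  ∀ ⦃f : ℝ → ℝ⦄ ⦃R p δ η : ℝ⦄, 0 < R → 0 < δ → δ ≤ L * R →
    CauchyBoundsOn f 1 R (Icc p (p + δ)) → 0 ≤ η →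
    c * δ ≤ volume.real {x ∈ Icc p (p + δ) | |f x| ≤ η} → ∀ x ∈ Icc p (p + δ), |f x| ≤ C * η ^ θ

theorem uniqueDiffOn_Icc_add {p δ : ℝ} (hδ : 0 < δ) : UniqueDiffOn ℝ (Icc p (p + δ)) :=
  uniqueDiffOn_Icc (lt_add_of_pos_right p hδ)

theorem CauchyBoundsOn.abs_le_of_density {f : ℝ → ℝ} {M R p δ c η : ℝ} (hR : 0 < R) (hδ : 0 < δ)
    (hc : 0 < c) (hf : CauchyBoundsOn f M R (Icc p (p + δ)))
    (hvol : c * δ ≤ volume.real {x ∈ Icc p (p + δ) | |f x| ≤ η}) {x : ℝ} (hx : x ∈ Icc p (p + δ))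
    (n : ℕ) :
    |f x| ≤ Real.exp 1 * (2 * Real.exp 1 / c) ^ n * (η + M * (2 * (δ / R)) ^ (n + 1)) +
      M * (2 * (δ / R)) ^ (n + 1) := by
  obtain ⟨P, hPdeg, hP⟩ := exists_polynomial_eval_eq_taylorWithinEval f n (Icc p (p + δ)) p
  have herr : ∀ y ∈ Icc p (p + δ), |f y - P.eval y| ≤ M * (2 * (δ / R)) ^ (n + 1) := fun y hy ↦ by
    simpa only [hP] using hf.abs_sub_taylorWithinEval_le hR hδ n hy
  have hcompact : IsCompact {y ∈ Icc p (p + δ) | |f y| ≤ η} :=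
    isCompact_Icc.of_isClosed_subset
      (hf.contDiffOn.continuousOn.abs.preimage_isClosed_of_isClosed isClosed_Icc isClosed_Iic)
      inter_subset_left
  have hremez := abs_eval_le_remez hPdeg hcompact (sep_subset _ _) hc hδ hvol
    (η := η + M * (2 * (δ / R)) ^ (n + 1)) (fun y hy ↦ by
      linarith [abs_sub_abs_le_abs_sub (P.eval y) (f y), abs_sub_comm (f y) (P.eval y),
        herr y hy.1, hy.2]) hx
  linarith [abs_sub_abs_le_abs_sub (f x) (P.eval x), herr x hx]

theorem exists_propagatesWith_local {c : ℝ} (hc : 0 < c) :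
    ∃ L > 0, ∃ C ≥ 1, ∃ θ ∈ Ioo (0 : ℝ) 1, PropagatesWith c L C θ := by
  set B := 1 + 2 * Real.exp 1 / c
  have hB : 1 < B := lt_add_of_pos_right 1 (by positivity)
  have hcB : 2 * Real.exp 1 / c ≤ B := le_add_of_nonneg_left zero_le_one
  have he : 1 ≤ Real.exp 1 := Real.one_le_exp zero_le_one
  refine ⟨1 / (4 * B), by positivity, 4 * Real.exp 1, by linarith, Real.logb (2 * B) 2,
    ⟨Real.logb_pos (by linarith) one_lt_two, ?_⟩, ?_⟩
  · rw [Real.logb_lt_iff_lt_rpow (by linarith) two_pos, Real.rpow_one]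
    linarith
  intro f R p δ η hR hδ hδR hf hη hvol x hx
  refine le_mul_rpow_of_forall_le hB (by positivity) hη ((hf.abs_le hx).trans he) fun n ↦ ?_
  obtain ⟨τ, hτ⟩ : ∃ τ, τ = 2 * (δ / R) := ⟨_, rfl⟩
  have hτ0 : 0 ≤ τ := hτ ▸ by positivity
  have hτB : τ * B ≤ 1 / 2 := by
    calc τ * B ≤ 2 * (1 / (4 * B)) * B := by
          have hratio : δ / R ≤ 1 / (4 * B) := (div_le_iff₀ hR).2 hδR
          rw [hτ]
          gcongr
      _ = 1 / 2 := by field_simp; norm_num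
  have hτ_half : τ ≤ 1 / 2 := (le_mul_of_one_le_right (by positivity) hB.le).trans hτB
  have herr : τ ^ (n + 1) * B ^ n ≤ 1 / 2 * (1 / 2) ^ n := by
    calc τ ^ (n + 1) * B ^ n = τ * (τ * B) ^ n := by rw [pow_succ', mul_pow, mul_assoc]
      _ ≤ 1 / 2 * (1 / 2) ^ n := by gcongr
  have hτ_le : τ ^ (n + 1) ≤ Real.exp 1 * (τ ^ (n + 1) * B ^ n) :=
    (le_mul_of_one_le_right (by positivity) (one_le_pow₀ hB.le)).trans
      (le_mul_of_one_le_left (by positivity) he)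
  calc |f x| ≤ Real.exp 1 * (2 * Real.exp 1 / c) ^ n * (η + τ ^ (n + 1)) + τ ^ (n + 1) := by
        simpa only [hτ, one_mul] using hf.abs_le_of_density hR hδ hc hvol hx n
    _ ≤ Real.exp 1 * B ^ n * (η + τ ^ (n + 1)) + Real.exp 1 * (τ ^ (n + 1) * B ^ n) := by
        gcongr
    _ = Real.exp 1 * (B ^ n * η + 2 * (τ ^ (n + 1) * B ^ n)) := by ring
    _ ≤ Real.exp 1 * (B ^ n * η + (1 / 2) ^ n) := by gcongr; linarith

theorem exists_half_measureReal_inter_ge {p δ c : ℝ} (hδ : 0 ≤ δ) {A : Set ℝ}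
    (hvol : c * (2 * δ) ≤ volume.real (Icc p (p + 2 * δ) ∩ A)) :
    ∃ q ∈ ({p, p + δ} : Set ℝ), c * δ ≤ volume.real (Icc q (q + δ) ∩ A) := by
  by_contra! hlt
  have hleft := hlt p (.inl rfl)
  have hright := hlt (p + δ) (.inr rfl)
  have hsplit : Icc p (p + 2 * δ) ∩ A = Icc p (p + δ) ∩ A ∪ Icc (p + δ) (p + δ + δ) ∩ A := by
    rw [← union_inter_distrib_right, Icc_union_Icc_eq_Icc (by linarith) (by linarith), two_mul,
      add_assoc]
  have hle := hvol.trans_eq (congrArg volume.real hsplit) |>.trans (measureReal_union_le _ _)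
  linarith

theorem mul_rpow_mul_rpow {C D t α θ : ℝ} (hD : 0 ≤ D) (ht : 0 ≤ t) :
    C * (D * t ^ α) ^ θ = C * D ^ θ * t ^ (α * θ) := by
  rw [Real.mul_rpow hD (Real.rpow_nonneg ht α), ← Real.rpow_mul ht, mul_assoc]

namespace PropagatesWith

variable {c L C θ : ℝ}

theorem anti {c' L' : ℝ} (h : PropagatesWith c L C θ) (hc : c ≤ c') (hL : L' ≤ L) :
    PropagatesWith c' L' C θ := fun _ _ _ _ _ hR hδ hδR hf hη hvol ↦
  h hR hδ (hδR.trans (mul_le_mul_of_nonneg_right hL hR.le)) hf hη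
    ((mul_le_mul_of_nonneg_right hc hδ.le).trans hvol)

theorem abs_le_of_shift (h : PropagatesWith c L C θ) (hc : c ≤ 1 / 2) {f : ℝ → ℝ}
    {R p q δ t : ℝ} (hR : 0 < R) (hδ : 0 < δ) (hδR : δ ≤ L * R)
    (hf : CauchyBoundsOn f 1 R (Icc q (q + δ))) (hpq : |q - p| ≤ δ / 2) (ht : 0 ≤ t)
    (hft : ∀ x ∈ Icc p (p + δ), |f x| ≤ t) : ∀ x ∈ Icc q (q + δ), |f x| ≤ C * t ^ θ := by
  refine h hR hδ hδR hf ht ?_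
  obtain ⟨hqp, hpq⟩ := abs_le.1 hpq
  have hsub : Icc (max q p) (max q p + δ / 2) ⊆ {x ∈ Icc q (q + δ) | |f x| ≤ t} := by
    intro x hx
    have hmax : max q p + δ / 2 ≤ q + δ ∧ max q p + δ / 2 ≤ p + δ := by
      constructor <;> rcases max_cases q p with ⟨hm, -⟩ | ⟨hm, -⟩ <;> linarith
    exact ⟨⟨(le_max_left q p).trans hx.1, hx.2.trans hmax.1⟩,
      hft x ⟨(le_max_right q p).trans hx.1, hx.2.trans hmax.2⟩⟩
  calc c * δ ≤ volume.real (Icc (max q p) (max q p + δ / 2)) := by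
        rw [Real.volume_real_Icc_of_le (by linarith)]
        linarith [mul_le_mul_of_nonneg_right hc hδ.le]
    _ ≤ volume.real {x ∈ Icc q (q + δ) | |f x| ≤ t} :=
        measureReal_mono hsub (measure_ne_top_of_subset (sep_subset _ _) measure_Icc_lt_top.ne)

theorem double (h : PropagatesWith c L C θ) (hc : c ≤ 1 / 2) (hC : 0 ≤ C) :
    PropagatesWith c (2 * L) (C * (C * C ^ θ) ^ θ) (θ * θ * θ) := by
  intro f R p δ' η hR hδ hδR hf hη hvol x hx
  obtain ⟨δ, rfl⟩ : ∃ δ, δ' = 2 * δ := ⟨δ' / 2, by ring⟩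
  replace hδ : 0 < δ := by linarith
  replace hδR : δ ≤ L * R := by linarith
  have hsub : ∀ q ∈ Icc p (p + δ), CauchyBoundsOn f 1 R (Icc q (q + δ)) := fun q hq ↦
    hf.mono (Icc_subset_Icc hq.1 (by linarith [hq.2])) (uniqueDiffOn_Icc_add hδ)
      (uniqueDiffOn_Icc_add (by linarith))
  obtain ⟨q, hq, hqvol⟩ := exists_half_measureReal_inter_ge hδ.le hvol
  have hqp : q ∈ Icc p (p + δ) ∧ |p + δ / 2 - q| ≤ δ / 2 := by
    rcases hq with rfl | rfl <;> refine ⟨⟨?_, ?_⟩, abs_le.2 ⟨?_, ?_⟩⟩ <;> linarith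
  have hdense : ∀ y ∈ Icc q (q + δ), |f y| ≤ C * η ^ θ :=
    h hR hδ hδR (hsub q hqp.1) hη hqvol
  have hmiddle : ∀ y ∈ Icc (p + δ / 2) (p + δ / 2 + δ), |f y| ≤ C * (C * η ^ θ) ^ θ :=
    h.abs_le_of_shift hc hR hδ hδR (hsub _ ⟨by linarith, by linarith⟩) hqp.2 (by positivity) hdense
  have hhalf : ∀ q' ∈ ({p, p + δ} : Set ℝ), ∀ y ∈ Icc q' (q' + δ),
      |f y| ≤ C * (C * (C * η ^ θ) ^ θ) ^ θ := by
    rintro q' (rfl | rfl) <;>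
      refine h.abs_le_of_shift hc hR hδ hδR (hsub _ ⟨?_, ?_⟩) (abs_le.2 ⟨?_, ?_⟩) (by positivity)
        hmiddle <;> linarith
  rw [← mul_rpow_mul_rpow (by positivity) hη, ← mul_rpow_mul_rpow hC hη]
  rcases le_total x (p + δ) with hxm | hxm
  · exact hhalf p (.inl rfl) x ⟨hx.1, hxm⟩
  · exact hhalf (p + δ) (.inr rfl) x ⟨hxm, by linarith [hx.2]⟩

theorem abs_le_mul_rpow (h : PropagatesWith c L C θ) {f : ℝ → ℝ} {M R p δ η : ℝ} (hM : 0 < M)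
    (hR : 0 < R) (hδ : 0 < δ) (hδR : δ ≤ L * R)
    (hf : CauchyBoundsOn f M R (Icc p (p + δ))) (hη : 0 ≤ η)
    (hvol : c * δ ≤ volume.real {x ∈ Icc p (p + δ) | |f x| ≤ η}) :
    ∀ x ∈ Icc p (p + δ), |f x| ≤ C * M ^ (1 - θ) * η ^ θ := by
  intro x hx
  have habs : ∀ y, |(M⁻¹ • f) y| = M⁻¹ * |f y| := fun y ↦ by
    rw [Pi.smul_apply, smul_eq_mul, abs_mul, abs_of_pos (inv_pos.2 hM)]
  have hnormalized : CauchyBoundsOn (M⁻¹ • f) 1 R (Icc p (p + δ)) := by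
    simpa only [abs_inv, abs_of_pos hM, inv_mul_cancel₀ hM.ne'] using hf.const_smul M⁻¹
  have hdense : c * δ ≤ volume.real {y ∈ Icc p (p + δ) | |(M⁻¹ • f) y| ≤ M⁻¹ * η} := by
    simpa only [habs, mul_le_mul_iff_right₀ (inv_pos.2 hM)] using hvol
  have hbound := h hR hδ hδR hnormalized (by positivity) hdense x hx
  rw [habs, inv_mul_le_iff₀ hM] at hbound
  calc |f x| ≤ M * (C * (M⁻¹ * η) ^ θ) := hbound
    _ = C * M ^ (1 - θ) * η ^ θ := by
      rw [Real.mul_rpow (by positivity) hη, Real.inv_rpow hM.le, Real.rpow_sub hM, Real.rpow_one]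
      ring

end PropagatesWith

theorem exists_propagatesWith {c : ℝ} (hc : 0 < c) (L : ℝ) :
    ∃ C ≥ 1, ∃ θ ∈ Ioo (0 : ℝ) 1, PropagatesWith c L C θ := by
  obtain ⟨L₀, hL₀, hlocal⟩ := exists_propagatesWith_local (lt_min hc one_half_pos)
  have hiter : ∀ n : ℕ, ∃ C ≥ 1, ∃ θ ∈ Ioo (0 : ℝ) 1,
      PropagatesWith (min c (1 / 2)) (2 ^ n * L₀) C θ := by
    intro n
    induction n with
    | zero => simpa only [pow_zero, one_mul] using hlocal
    | succ n ih =>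
      obtain ⟨C, hC, θ, ⟨hθ0, hθ1⟩, h⟩ := ih
      have hCθ : 1 ≤ C ^ θ := Real.one_le_rpow hC hθ0.le
      refine ⟨C * (C * C ^ θ) ^ θ, one_le_mul_of_one_le_of_one_le hC
        (Real.one_le_rpow (one_le_mul_of_one_le_of_one_le hC hCθ) hθ0.le), θ * θ * θ,
        ⟨by positivity, mul_lt_one_of_nonneg_of_lt_one_left (by positivity)
          (mul_lt_one_of_nonneg_of_lt_one_left hθ0.le hθ1 hθ1.le) hθ1.le⟩, ?_⟩
      rw [pow_succ', mul_assoc]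
      exact h.double (min_le_right _ _) (by linarith)
  obtain ⟨n, hn⟩ := pow_unbounded_of_one_lt (L / L₀) one_lt_two
  obtain ⟨C, hC, θ, hθ, h⟩ := hiter n
  exact ⟨C, hC, θ, hθ, h.anti (min_le_left _ _) ((div_lt_iff₀ hL₀).1 hn).le⟩

end Propagation

section Averages

variable {α : Type*} {m : MeasurableSpace α} {μ : Measure α}

theorem half_measureReal_univ_le_of_average [IsFiniteMeasure μ] {g : α → ℝ} (hg : Integrable g μ)
    (hg0 : 0 ≤ g) : μ.real univ / 2 ≤ μ.real {x | g x ≤ 2 * ⨍ y, g y ∂μ} := by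
  have hint : μ.real univ * ⨍ y, g y ∂μ = ∫ y, g y ∂μ := measure_smul_average μ g
  have havg0 : 0 ≤ ⨍ y, g y ∂μ := integral_nonneg hg0
  rcases havg0.eq_or_lt with havg | havg
  · rw [← havg, mul_zero, eq_comm, integral_eq_zero_iff_of_nonneg hg0 hg] at hint
    have hfull : μ.real {x | g x ≤ 2 * ⨍ y, g y ∂μ} = μ.real univ := by
      refine measureReal_congr (Filter.eventuallyEq_univ.2 ?_)
      filter_upwards [hint] with x hx
      simp only [← havg, mul_zero, hx, Pi.zero_apply, le_refl]
    rw [hfull]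
    exact half_le_self measureReal_nonneg
  · have hmarkov := mul_meas_ge_le_integral_of_nonneg (.of_forall hg0) hg (2 * ⨍ y, g y ∂μ)
    have hlarge : μ.real {x | 2 * ⨍ y, g y ∂μ ≤ g x} ≤ μ.real univ / 2 := by
      rw [← hint] at hmarkov
      exact le_of_mul_le_mul_right (by linarith) havg
    have hcover : univ ⊆ {x | g x ≤ 2 * ⨍ y, g y ∂μ} ∪ {x | 2 * ⨍ y, g y ∂μ ≤ g x} :=
      fun x _ ↦ le_total (g x) (2 * ⨍ y, g y ∂μ)
    linarith [(measureReal_mono hcover).trans (measureReal_union_le (μ := μ) _ _)]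

theorem half_measureReal_le_of_setAverage {E : Set α} (hE : μ E ≠ ⊤) {g : α → ℝ}
    (hg : IntegrableOn g E μ) (hg0 : 0 ≤ g) :
    μ.real E / 2 ≤ μ.real {x ∈ E | g x ≤ 2 * ⨍ y in E, g y ∂μ} := by
  have : IsFiniteMeasure (μ.restrict E) := isFiniteMeasure_restrict.2 hE
  have hhalf := half_measureReal_univ_le_of_average hg hg0
  rwa [measureReal_def, measureReal_def, Measure.restrict_apply_univ, Measure.restrict_apply₀
    (nullMeasurableSet_le hg.aemeasurable aemeasurable_const), inter_comm] at hhalf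

end Averages

theorem propagation_of_smallness_measurable_sets_general {ρ r : ℝ} (hρ : 0 < ρ) (hr : 0 < r) :
    ∃ C ≥ (1 : ℝ), ∃ θ ∈ Ioo (0 : ℝ) 1,
      ∀ (a s M : ℝ) (f : ℝ → ℝ) (E : Set ℝ), 0 < s → 0 < M →
        CauchyBoundsOn f M (s * ρ) (Icc a (a + s)) → E ⊆ Icc a (a + s) →
        ENNReal.ofReal (r * s) ≤ volume E →
        ∀ x ∈ Icc a (a + s), |f x| ≤ C * M ^ (1 - θ) * (⨍ y in E, |f y|) ^ θ := by
  obtain ⟨C, hC, θ, hθ, hprop⟩ := exists_propagatesWith (half_pos hr) (1 / ρ)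
  refine ⟨C * 2 ^ θ, one_le_mul_of_one_le_of_one_le hC (Real.one_le_rpow one_le_two hθ.1.le), θ, hθ,
    fun a s M f E hs hM hf hE hvol x hx ↦ ?_⟩
  have hEfin : volume E ≠ ⊤ := measure_ne_top_of_subset hE measure_Icc_lt_top.ne
  have hint : IntegrableOn (fun y ↦ |f y|) E :=
    hf.contDiffOn.continuousOn.abs.integrableOn_Icc.mono_set hE
  have hA : 0 ≤ ⨍ y in E, |f y| := integral_nonneg fun _ ↦ abs_nonneg _
  have hdense : r / 2 * s ≤ volume.real {y ∈ Icc a (a + s) | |f y| ≤ 2 * ⨍ y in E, |f y|} :=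
    calc r / 2 * s = r * s / 2 := by ring
      _ ≤ volume.real E / 2 := by gcongr; exact (ENNReal.ofReal_le_iff_le_toReal hEfin).1 hvol
      _ ≤ volume.real {y ∈ E | |f y| ≤ 2 * ⨍ y in E, |f y|} :=
        half_measureReal_le_of_setAverage hEfin hint fun _ ↦ abs_nonneg _
      _ ≤ volume.real {y ∈ Icc a (a + s) | |f y| ≤ 2 * ⨍ y in E, |f y|} :=
        measureReal_mono (fun y hy ↦ ⟨hE hy.1, hy.2⟩)
          (measure_ne_top_of_subset (sep_subset _ _) measure_Icc_lt_top.ne)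
  calc |f x| ≤ C * M ^ (1 - θ) * (2 * ⨍ y in E, |f y|) ^ θ :=
        hprop.abs_le_mul_rpow hM (mul_pos hs hρ) hs (by field_simp; rfl) hf (by positivity) hdense
          x hx
    _ = C * 2 ^ θ * M ^ (1 - θ) * (⨍ y in E, |f y|) ^ θ := by
        rw [Real.mul_rpow zero_le_two hA]
        ring

/-- **Propagation of smallness from measurable sets for analytic functions on an interval.**
Given `ρ ∈ (0,1]` and `r ∈ (0,1]` there are `C ≥ 1` and `θ ∈ (0,1)` such that any `f`
satisfying the quantitative analyticity bounds
`|f^{(β)}(x)| ≤ M β! (sρ)^{-β}` on `[a, a+s]`, and any measurable `Ehat ⊆ [a,a+s]` with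
`|Ehat| ≥ r s`, satisfy
`sup_{[a,a+s]} |f| ≤ C M^{1-θ} ((1/|Ehat|) ∫_Ehat |f|)^θ`. -/
theorem propagation_of_smallness_measurable_sets
    (ρ r : ℝ) (hρ : ρ ∈ Set.Ioc (0:ℝ) 1) (hr : r ∈ Set.Ioc (0:ℝ) 1) :
    ∃ C ≥ (1:ℝ), ∃ θ ∈ Set.Ioo (0:ℝ) 1,
      ∀ (a s M : ℝ) (f : ℝ → ℝ) (Ehat : Set ℝ),
        0 < s → 0 < M →
        ContDiffOn ℝ (⊤ : ℕ∞) f (Set.Icc a (a + s)) →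
        (∀ (β : ℕ), ∀ x ∈ Set.Icc a (a + s),
          |iteratedDerivWithin β f (Set.Icc a (a + s)) x| ≤
            M * (Nat.factorial β) * (s * ρ) ^ (-(β : ℤ))) →
        MeasurableSet Ehat → Ehat ⊆ Set.Icc a (a + s) →
        ENNReal.ofReal (r * s) ≤ volume Ehat →
        ∀ x ∈ Set.Icc a (a + s),
          |f x| ≤ C * M ^ (1 - θ) *
            (((volume Ehat).toReal)⁻¹ * ∫ y in Ehat, |f y|) ^ θ := by
  obtain ⟨C, hC, θ, hθ, h⟩ := propagation_of_smallness_measurable_sets_general hρ.1 hr.1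
  refine ⟨C, hC, θ, hθ, fun a s M f Ehat hs hM hf hbound _ hE hvol x hx ↦ ?_⟩
  simp only [zpow_neg, zpow_natCast, ← div_eq_mul_inv] at hbound
  simpa only [setAverage_eq, smul_eq_mul, measureReal_def] using h a s M f Ehat hs hM
    ⟨hf, hbound⟩ hE hvol x hx
end
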